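/- arXiv:2310.13445 — 3 statements merged into one kernel-verified Lean document; each statement's English description precedes it below -/
import Mathlib

section
/- Let $p \ge 1$ be an integer, $\nu \ge 0$, $r > 0$, and $1/2 < s < 1$. Then for every $x \in \mathbb{R}^p$ with $x \ne 0$, $I_{\nu,r}(x;s) = \dfrac{\pi^{p/2}}{s\, r^{(2\nu+p)/(2s)}} \sum_{k=0}^{\infty} \dfrac{1}{k!} \left(-\dfrac{\|x\|^2}{4 r^{1/s}}\right)^{k} \dfrac{\Gamma\!\big(\tfrac{2\nu+p+2k}{2s}\big)}{\Gamma\!\big(\tfrac{p+2k}{2}\big)}$, the series on the right-hand side being absolutely convergent. -/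
/-!
The cosine is expanded in its power series and integrated term by term. Since `2 * s > 1`, the
weight `(‖t‖²)^ν exp(-r (‖t‖²)^s)` is integrable against `cosh (‖x‖ ‖t‖) ≤ exp (‖x‖ ‖t‖)`, which
dominates all partial sums (`hasSum_integral`).

In polar coordinates the `2k`-th moment of the weight in direction `x` is the product of a spherical
moment `∫ ⟪u, x⟫^(2k) dσ(u)`, independent of the weight, and a one-dimensional Gamma integral
(`integral_moment`). The spherical moments need no direct computation: the expansion also holds for
the Gaussian weight `ν = 0`, `r = s = 1`, whose Fourier transform is `π^(p/2) exp(-‖x‖²/4)`.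
Replacing `x` by `√y • x` and comparing coefficients of the two power series in `y ≥ 0` gives the
spherical moments (`sphereMoment_eq`). Absolute convergence is automatic, since a summable real
series is absolutely summable.
-/

open MeasureTheory Real
open scoped RealInnerProductSpace

/-- Two power series with the same sum on the half-line `[0, ∞)` have equal coefficients: their
difference is analytic at `0` and vanishes on a set accumulating there. -/
theorem coeff_unique (a b : ℕ → ℝ) (f : ℝ → ℝ)
    (ha : ∀ y, 0 ≤ y → HasSum (fun n => a n * y ^ n) (f y))
    (hb : ∀ y, 0 ≤ y → HasSum (fun n => b n * y ^ n) (f y)) : a = b := by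
  set P := FormalMultilinearSeries.ofScalars ℝ (fun n => a n - b n) with hP
  have hsum : ∀ y, 0 ≤ y → HasSum (fun n => (a n - b n) * y ^ n) 0 := fun y hy => by
    simpa [sub_mul] using (ha y hy).sub (hb y hy)
  have hrad : (1 : ENNReal) ≤ P.radius := by
    refine P.le_radius_of_summable_norm (r := 1) ?_
    simpa [hP] using (summable_abs_iff.2 (hsum 1 zero_le_one).summable)
  have hball := P.hasFPowerSeriesOnBall (lt_of_lt_of_le one_pos hrad)
  have hzero : ∀ y, 0 ≤ y → P.sum y = 0 := fun y hy => by
    rw [FormalMultilinearSeries.sum, ← (hsum y hy).tsum_eq]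
    congr 1; ext n
    simp [hP, mul_comm]
  have hfreq : ∃ᶠ y in nhdsWithin (0 : ℝ) {0}ᶜ, P.sum y = 0 := by
    have h : ∀ᶠ y in nhdsWithin (0 : ℝ) (Set.Ioi 0), P.sum y = 0 :=
      eventually_nhdsWithin_of_forall fun y hy => hzero y (le_of_lt hy)
    exact h.frequently.filter_mono (nhdsWithin_mono _ fun y (hy : 0 < y) => hy.ne')
  have hev := hball.analyticAt.frequently_zero_iff_eventually_zero.1 hfreq
  have hP0 : P = 0 := (hball.hasFPowerSeriesAt.congr hev).eq_zero
  have hc := (FormalMultilinearSeries.ofScalars_series_eq_zero ℝ).1 hP0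
  ext n
  exact sub_eq_zero.1 (congrFun hc n)

section

variable {p : ℕ}

/-- The spherical moment `∫ ⟪u, x⟫ ^ (2 * k) dσ(u)` over the unit sphere of `ℝ^p`, for the
unnormalised surface measure `σ`. -/
noncomputable def sphereMoment (x : EuclideanSpace ℝ (Fin p)) (k : ℕ) : ℝ :=
  ∫ u : Metric.sphere (0 : EuclideanSpace ℝ (Fin p)) 1, ⟪(u : EuclideanSpace ℝ (Fin p)), x⟫ ^ (2 * k)
    ∂(volume : Measure (EuclideanSpace ℝ (Fin p))).toSphere

theorem sphereMoment_smul (x : EuclideanSpace ℝ (Fin p)) (c : ℝ) (k : ℕ) :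
    sphereMoment (c • x) k = c ^ (2 * k) * sphereMoment x k := by
  simp only [sphereMoment, inner_smul_right, mul_pow, integral_const_mul]

/-- Polar coordinates separate the direction from the radius, so the angular factor does not depend
on the radial profile `g`. No integrability of `g` is needed: both sides are `0` by convention if
the radial integrand is not integrable. -/
theorem integral_polar (hp : 1 ≤ p) (x : EuclideanSpace ℝ (Fin p)) (k : ℕ) (g : ℝ → ℝ) :
    ∫ t : EuclideanSpace ℝ (Fin p), ⟪t, x⟫ ^ (2 * k) * g ‖t‖ =
      sphereMoment x k * ∫ y in Set.Ioi (0 : ℝ), y ^ (p - 1) * (y ^ (2 * k) * g y) := by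
  have : Nonempty (Fin p) := ⟨⟨0, hp⟩⟩
  let F : Metric.sphere (0 : EuclideanSpace ℝ (Fin p)) 1 × Set.Ioi (0 : ℝ) → ℝ := fun z =>
    ⟪(z.1 : EuclideanSpace ℝ (Fin p)), x⟫ ^ (2 * k) * ((z.2 : ℝ) ^ (2 * k) * g z.2)
  calc
    _ = ∫ t : ({(0)}ᶜ : Set (EuclideanSpace ℝ (Fin p))),
          ⟪(t : EuclideanSpace ℝ (Fin p)), x⟫ ^ (2 * k) *
            g ‖(t : EuclideanSpace ℝ (Fin p))‖ ∂(volume.comap Subtype.val) := by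
      rw [integral_subtype_comap (measurableSet_singleton _).compl
        fun t : EuclideanSpace ℝ (Fin p) ↦ ⟪t, x⟫ ^ (2 * k) * g ‖t‖,
        restrict_compl_singleton]
    _ = ∫ z, F z ∂(volume : Measure (EuclideanSpace ℝ (Fin p))).toSphere.prod
          (.volumeIoiPow (Module.finrank ℝ (EuclideanSpace ℝ (Fin p)) - 1)) := by
      rw [← (volume : Measure
        (EuclideanSpace ℝ (Fin p))).measurePreserving_homeomorphUnitSphereProd.integral_comp
        (Homeomorph.measurableEmbedding _) F]
      refine integral_congr_ae (.of_forall fun t => ?_)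
      have ht : ‖t.1‖ ≠ 0 := norm_ne_zero_iff.2 t.2
      simp only [F, homeomorphUnitSphereProd_apply_snd_coe,
        homeomorphUnitSphereProd_apply_fst_coe, inner_smul_left]
      rw [← mul_assoc, ← mul_pow]
      congr 2
      simp
      field_simp
    _ = sphereMoment x k * ∫ y : Set.Ioi (0 : ℝ), (y : ℝ) ^ (2 * k) * g y
          ∂(.volumeIoiPow (Module.finrank ℝ (EuclideanSpace ℝ (Fin p)) - 1)) :=
      integral_prod_mul
        (fun u : Metric.sphere (0 : EuclideanSpace ℝ (Fin p)) 1 =>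
          ⟪(u : EuclideanSpace ℝ (Fin p)), x⟫ ^ (2 * k))
        (fun y : Set.Ioi (0 : ℝ) => (y : ℝ) ^ (2 * k) * g y)
    _ = _ := by
      congr 1
      simp only [Measure.volumeIoiPow, ENNReal.ofReal, finrank_euclideanSpace, Fintype.card_fin]
      rw [integral_withDensity_eq_integral_smul,
        integral_subtype_comap measurableSet_Ioi fun a ↦
          Real.toNNReal (a ^ (p - 1)) • (a ^ (2 * k) * g a),
        setIntegral_congr_fun measurableSet_Ioi fun y hy ↦ ?_]
      · simp only [NNReal.smul_def, smul_eq_mul, Real.coe_toNNReal _ (pow_nonneg (le_of_lt hy) _)]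
      · fun_prop

theorem weight_radial {ν r s y : ℝ} (hy : 0 < y) :
    (y ^ 2) ^ ν * rexp (-r * (y ^ 2) ^ s) = y ^ (2 * ν) * rexp (-r * y ^ (2 * s)) := by
  rw [← rpow_natCast, ← rpow_mul hy.le, ← rpow_mul hy.le]; simp

theorem integral_moment (hp : 1 ≤ p) {ν r s : ℝ} (hν : 0 ≤ ν) (hr : 0 < r) (hs : 0 < s)
    (x : EuclideanSpace ℝ (Fin p)) (k : ℕ) :
    ∫ t : EuclideanSpace ℝ (Fin p),
        ⟪t, x⟫ ^ (2 * k) * ((‖t‖ ^ 2) ^ ν * rexp (-r * (‖t‖ ^ 2) ^ s)) =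
      sphereMoment x k * (r ^ (-(2 * ν + p + 2 * k) / (2 * s)) * (1 / (2 * s)) *
        Gamma ((2 * ν + p + 2 * k) / (2 * s))) := by
  rw [integral_polar hp x k fun y => (y ^ 2) ^ ν * rexp (-r * (y ^ 2) ^ s)]
  have hp' : (1 : ℝ) ≤ p := by exact_mod_cast hp
  have hk : (0 : ℝ) ≤ k := k.cast_nonneg
  have h := integral_rpow_mul_exp_neg_mul_rpow (p := 2 * s) (q := 2 * ν + p + 2 * k - 1) (b := r)
    (by positivity) (by linarith) hr
  rw [sub_add_cancel] at h
  rw [← h]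
  congr 1
  refine setIntegral_congr_fun measurableSet_Ioi fun y (hy : 0 < y) => ?_
  rw [weight_radial hy, ← mul_assoc, ← mul_assoc, ← pow_add, ← rpow_natCast, ← rpow_add hy]
  push_cast [Nat.cast_sub hp]
  ring_nf

/-- This is where `1 / 2 < s` enters: the decay `exp(-r ‖t‖^(2s))` beats every exponential
`exp(c ‖t‖)`. -/
theorem integrable_exp_weight (hp : 1 ≤ p) {ν r s : ℝ} (hν : 0 ≤ ν) (hr : 0 < r) (hs : 1 / 2 < s)
    {c : ℝ} (hc : 0 ≤ c) :
    Integrable fun t : EuclideanSpace ℝ (Fin p) =>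
      rexp (c * ‖t‖) * ((‖t‖ ^ 2) ^ ν * rexp (-r * (‖t‖ ^ 2) ^ s)) := by
  have : Nonempty (Fin p) := ⟨⟨0, hp⟩⟩
  have hp' : (1 : ℝ) ≤ p := by exact_mod_cast hp
  rw [integrable_fun_norm_addHaar volume
    (f := fun y => rexp (c * y) * ((y ^ 2) ^ ν * rexp (-r * (y ^ 2) ^ s)))]
  simp only [finrank_euclideanSpace, Fintype.card_fin, smul_eq_mul]
  -- Beyond `R` the linear term is at most half of the decay term, as `y ^ (2 * s - 1) ≥ 2 * c / r`.
  set R : ℝ := (2 * c / r) ^ (1 / (2 * s - 1)) with hR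
  have hbound : ∀ y, 0 < y → c * y ≤ r / 2 * y ^ (2 * s) + c * R := by
    intro y hy
    rcases le_total y R with h | h
    · have := mul_le_mul_of_nonneg_left h hc
      have : 0 ≤ r / 2 * y ^ (2 * s) := by positivity
      linarith
    · have h1 : 2 * c / r ≤ y ^ (2 * s - 1) := by
        have h2 := rpow_le_rpow (by positivity) h (show 0 ≤ 2 * s - 1 by linarith)
        rwa [hR, ← rpow_mul (by positivity), one_div_mul_cancel (by linarith), rpow_one] at h2
      have h3 : y ^ (2 * s) = y ^ (2 * s - 1) * y := by
        rw [← rpow_add_one hy.ne']; ring_nf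
      rw [div_le_iff₀ hr] at h1
      have : 0 ≤ c * R := by positivity
      nlinarith
  have hint := (integrableOn_rpow_mul_exp_neg_mul_rpow (p := 2 * s) (s := 2 * ν + p - 1)
    (b := r / 2) (by linarith) (by linarith) (by positivity)).const_mul (rexp (c * R))
  refine Integrable.mono' hint (by fun_prop) ?_
  refine (ae_restrict_iff' measurableSet_Ioi).2 (.of_forall fun y (hy : 0 < y) => ?_)
  rw [weight_radial hy, norm_of_nonneg (by positivity)]
  have h4 : y ^ (2 * ν + p - 1) = y ^ (p - 1) * y ^ (2 * ν) := by
    rw [← rpow_natCast, ← rpow_add hy]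
    push_cast [Nat.cast_sub hp]
    ring_nf
  rw [h4]
  calc _ = y ^ (p - 1) * y ^ (2 * ν) * rexp (c * y + -r * y ^ (2 * s)) := by rw [exp_add]; ring
    _ ≤ y ^ (p - 1) * y ^ (2 * ν) * rexp (c * R + -(r / 2) * y ^ (2 * s)) := by
      refine mul_le_mul_of_nonneg_left (exp_le_exp.2 ?_) (by positivity)
      linarith [hbound y hy]
    _ = _ := by rw [exp_add]; ring

/-- Termwise integration of the cosine series, by dominated convergence with the `cosh` series of
`‖x‖ * ‖t‖` as dominating series. -/
theorem hasSum_integral (hp : 1 ≤ p) {ν r s : ℝ} (hν : 0 ≤ ν) (hr : 0 < r) (hs : 1 / 2 < s)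
    (x : EuclideanSpace ℝ (Fin p)) :
    HasSum (fun k : ℕ => (-1) ^ k / ((2 * k).factorial : ℝ) *
      (sphereMoment x k * (r ^ (-(2 * ν + p + 2 * k) / (2 * s)) * (1 / (2 * s)) *
        Gamma ((2 * ν + p + 2 * k) / (2 * s)))))
    (∫ t : EuclideanSpace ℝ (Fin p),
        cos ⟪t, x⟫ * (‖t‖ ^ 2) ^ ν * rexp (-r * (‖t‖ ^ 2) ^ s)) := by
  simp_rw [← integral_moment hp hν hr (by linarith : 0 < s) x, ← integral_const_mul]
  have hw : ∀ t : EuclideanSpace ℝ (Fin p), 0 ≤ (‖t‖ ^ 2) ^ ν * rexp (-r * (‖t‖ ^ 2) ^ s) :=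
    fun t => by positivity
  have hm : Measurable fun t : EuclideanSpace ℝ (Fin p) =>
      (‖t‖ ^ 2) ^ ν * rexp (-r * (‖t‖ ^ 2) ^ s) := by fun_prop
  have hi : Measurable fun t : EuclideanSpace ℝ (Fin p) => ⟪t, x⟫ := by fun_prop
  have hcosh : ∀ t : EuclideanSpace ℝ (Fin p), HasSum (fun k : ℕ =>
      (‖x‖ * ‖t‖) ^ (2 * k) / ((2 * k).factorial : ℝ) *
        ((‖t‖ ^ 2) ^ ν * rexp (-r * (‖t‖ ^ 2) ^ s)))
      (cosh (‖x‖ * ‖t‖) * ((‖t‖ ^ 2) ^ ν * rexp (-r * (‖t‖ ^ 2) ^ s))) := fun t =>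
    (Real.hasSum_cosh _).mul_right _
  refine hasSum_integral_of_dominated_convergence
    (fun k t => (‖x‖ * ‖t‖) ^ (2 * k) / ((2 * k).factorial : ℝ) *
        ((‖t‖ ^ 2) ^ ν * rexp (-r * (‖t‖ ^ 2) ^ s)))
    (fun k => (((hi.pow_const _).mul hm).const_mul _).aestronglyMeasurable)
    (fun k => .of_forall fun t => ?_) (.of_forall fun t => (hcosh t).summable) ?_
    (.of_forall fun t => ?_)
  · rw [← mul_assoc, norm_mul, norm_of_nonneg (hw t)]
    refine mul_le_mul_of_nonneg_right ?_ (hw t)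
    rw [norm_mul, norm_div, norm_pow, norm_pow, norm_neg, norm_one, one_pow, norm_natCast,
      div_mul_eq_mul_div, one_mul]
    gcongr
    rw [mul_comm]
    exact norm_inner_le_norm t x
  · simp_rw [fun t => (hcosh t).tsum_eq]
    refine Integrable.mono' (integrable_exp_weight hp hν hr hs (norm_nonneg x))
      (by fun_prop) (.of_forall fun t => ?_)
    rw [norm_of_nonneg (mul_nonneg (cosh_pos _).le (hw t))]
    refine mul_le_mul_of_nonneg_right ?_ (hw t)
    rw [cosh_eq]
    have : rexp (-(‖x‖ * ‖t‖)) ≤ rexp (‖x‖ * ‖t‖) :=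
      exp_le_exp.2 (neg_le_self (by positivity))
    linarith
  · rw [mul_assoc (cos _)]
    refine ((Real.hasSum_cos ⟪t, x⟫).mul_right
      ((‖t‖ ^ 2) ^ ν * rexp (-r * (‖t‖ ^ 2) ^ s))).congr_fun fun k => ?_
    ring

/-- The Fourier transform of the Gaussian, with the weight written in the form of the case `ν = 0`,
`r = s = 1`. -/
theorem integral_cos_gaussian (x : EuclideanSpace ℝ (Fin p)) :
    ∫ t : EuclideanSpace ℝ (Fin p), cos ⟪t, x⟫ * (‖t‖ ^ 2) ^ (0 : ℝ) *
      rexp (-1 * (‖t‖ ^ 2) ^ (1 : ℝ)) = π ^ ((p : ℝ) / 2) * rexp (-(‖x‖ ^ 2 / 4)) := by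
  have h := GaussianFourier.integral_cexp_neg_mul_sq_norm_add (b := 1) (by simp) Complex.I x
  have hint : Integrable fun t : EuclideanSpace ℝ (Fin p) =>
      Complex.exp (-1 * ‖t‖ ^ 2 + Complex.I * ⟪x, t⟫) :=
    GaussianFourier.integrable_cexp_neg_mul_sq_norm_add (b := 1) (by simp) Complex.I x
  have h2 := congrArg Complex.re h
  rw [← RCLike.re_eq_complex_re, ← integral_re hint] at h2
  have hR : ((π / 1 : ℂ) ^ (Module.finrank ℝ (EuclideanSpace ℝ (Fin p)) / 2 : ℂ) *
      Complex.exp (Complex.I ^ 2 * ‖x‖ ^ 2 / (4 * 1))) =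
      ((π ^ ((p : ℝ) / 2) * rexp (-(‖x‖ ^ 2 / 4)) : ℝ) : ℂ) := by
    push_cast [Complex.ofReal_cpow pi_pos.le]
    simp only [finrank_euclideanSpace, Fintype.card_fin, Complex.I_sq]
    ring_nf
  rw [hR] at h2
  rw [RCLike.re_eq_complex_re, Complex.ofReal_re] at h2
  rw [← h2]
  congr 1; ext t
  rw [Complex.exp_re]
  have h3 : (-1 * (‖t‖ : ℂ) ^ 2 + Complex.I * (⟪x, t⟫ : ℝ)).re = -1 * ‖t‖ ^ 2 := by
    simp [← Complex.ofReal_pow]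
  have h4 : (-1 * (‖t‖ : ℂ) ^ 2 + Complex.I * (⟪x, t⟫ : ℝ)).im = ⟪x, t⟫ := by
    simp [← Complex.ofReal_pow]
  rw [h3, h4, real_inner_comm]
  simp [mul_comm]

/-- The value of the spherical moments, read off from the Gaussian case by comparing coefficients in
`y`, where `x` is scaled by `√y`. -/
theorem sphereMoment_eq (hp : 1 ≤ p) (x : EuclideanSpace ℝ (Fin p)) (k : ℕ) :
    (-1) ^ k / ((2 * k).factorial : ℝ) * sphereMoment x k =
      2 * π ^ ((p : ℝ) / 2) / Gamma (((p : ℝ) + 2 * k) / 2) *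
        (1 / (k.factorial : ℝ) * (-(‖x‖ ^ 2 / 4)) ^ k) := by
  have hp' : (1 : ℝ) ≤ p := by exact_mod_cast hp
  have key := coeff_unique
    (fun k => (-1) ^ k / ((2 * k).factorial : ℝ) *
      (sphereMoment x k * (1 / 2 * Gamma (((p : ℝ) + 2 * k) / 2))))
    (fun k => π ^ ((p : ℝ) / 2) * (1 / (k.factorial : ℝ) * (-(‖x‖ ^ 2 / 4)) ^ k))
    (fun y => π ^ ((p : ℝ) / 2) * rexp (-(‖x‖ ^ 2 / 4) * y)) ?_ ?_
  · have h := congrFun key k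
    beta_reduce at h
    have hG : Gamma (((p : ℝ) + 2 * k) / 2) ≠ 0 := (Gamma_pos_of_pos (by positivity)).ne'
    rw [div_mul_eq_mul_div (2 * _), eq_div_iff hG]
    linear_combination 2 * h
  · intro y hy
    have h := hasSum_integral hp le_rfl one_pos (by norm_num : (1 / 2 : ℝ) < 1) (√y • x)
    rw [integral_cos_gaussian] at h
    convert h using 2 with n
    · rw [sphereMoment_smul, pow_mul, sq_sqrt hy, one_rpow]
      ring_nf
    · rw [norm_smul, mul_pow, norm_of_nonneg (sqrt_nonneg y), sq_sqrt hy]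
      ring_nf
  · intro y hy
    have h := (NormedSpace.expSeries_div_hasSum_exp (-(‖x‖ ^ 2 / 4) * y)).mul_left (π ^ ((p : ℝ) / 2))
    rw [← Real.exp_eq_exp_ℝ] at h
    refine h.congr_fun fun n => ?_
    rw [mul_pow]; ring

end

/-- Series expansion of `I_{ν,r}(x;s) = ∫ cos(tᵀx)(‖t‖²)^ν exp(-r(‖t‖²)^s) dt` for
`1/2 < s < 1` and `x ≠ 0`, the series being absolutely convergent. -/
theorem kotz_integral_series_half_lt_s
    (p : ℕ) (hp : 1 ≤ p) (ν r s : ℝ) (hν : 0 ≤ ν) (hr : 0 < r)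
    (hs₁ : 1 / 2 < s) (hs₂ : s < 1)
    (x : EuclideanSpace ℝ (Fin p)) (hx : x ≠ 0) :
    Summable (fun k : ℕ =>
      |(1 / (k.factorial : ℝ)) * (-(‖x‖ ^ 2 / (4 * r ^ (1 / s)))) ^ k *
        (Real.Gamma ((2 * ν + p + 2 * k) / (2 * s)) / Real.Gamma (((p : ℝ) + 2 * k) / 2))|) ∧
    ∫ t : EuclideanSpace ℝ (Fin p),
        Real.cos ⟪t, x⟫ * (‖t‖ ^ 2) ^ ν * Real.exp (-r * (‖t‖ ^ 2) ^ s) =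
      π ^ ((p : ℝ) / 2) / (s * r ^ ((2 * ν + p) / (2 * s))) *
        ∑' k : ℕ, (1 / (k.factorial : ℝ)) * (-(‖x‖ ^ 2 / (4 * r ^ (1 / s)))) ^ k *
          (Real.Gamma ((2 * ν + p + 2 * k) / (2 * s)) / Real.Gamma (((p : ℝ) + 2 * k) / 2)) := by
  have hs : 0 < s := by linarith
  have h := hasSum_integral hp hν hr hs₁ x
  have hC : π ^ ((p : ℝ) / 2) / (s * r ^ ((2 * ν + p) / (2 * s))) ≠ 0 := by positivity
  have hterm : ∀ k : ℕ, (-1) ^ k / ((2 * k).factorial : ℝ) *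
      (sphereMoment x k * (r ^ (-(2 * ν + p + 2 * k) / (2 * s)) * (1 / (2 * s)) *
        Gamma ((2 * ν + p + 2 * k) / (2 * s)))) =
      π ^ ((p : ℝ) / 2) / (s * r ^ ((2 * ν + p) / (2 * s))) *
        ((1 / (k.factorial : ℝ)) * (-(‖x‖ ^ 2 / (4 * r ^ (1 / s)))) ^ k *
        (Real.Gamma ((2 * ν + p + 2 * k) / (2 * s)) / Real.Gamma (((p : ℝ) + 2 * k) / 2))) := by
    intro k
    have hpow : r ^ (-(2 * ν + p + 2 * k) / (2 * s)) =
        (r ^ ((2 * ν + p) / (2 * s)))⁻¹ * ((r ^ (1 / s)) ^ k)⁻¹ := by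
      rw [← rpow_natCast, ← rpow_mul hr.le, ← rpow_neg hr.le, ← rpow_neg hr.le, ← rpow_add hr]
      congr 1
      field_simp
      ring
    have hbase : (-(‖x‖ ^ 2 / (4 * r ^ (1 / s)))) ^ k =
        (-(‖x‖ ^ 2 / 4)) ^ k * ((r ^ (1 / s)) ^ k)⁻¹ := by
      rw [← inv_pow, ← mul_pow]
      congr 1
      field_simp
    rw [← mul_assoc, sphereMoment_eq hp x k, hpow, hbase]
    field_simp
  simp_rw [hterm] at h
  refine ⟨summable_abs_iff.2 ((summable_mul_left_iff hC).1 h.summable), ?_⟩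
  rw [← h.tsum_eq, tsum_mul_left]
end

section
/- Let $p \ge 1$ be an integer, $\nu \ge 0$, $r > 0$, and $0 < s < 1/2$. Then for every $x \in \mathbb{R}^p$ with $x \ne 0$, $I_{\nu,r}(x;s) = \dfrac{\pi^{p/2-1}}{r^{(2\nu+p)/(2s)}} \sum_{k=0}^{\infty} \dfrac{(-1)^{k+1}}{k!}\, 2^{2sk+2\nu+p}\, \Gamma\!\big(sk+\nu+\tfrac{p}{2}\big)\, \Gamma(sk+\nu+1)\, \sin\!\big(\pi(sk+\nu)\big)\, \left(\dfrac{\|x\|^2}{r^{1/s}}\right)^{-sk-\nu-p/2}$, the series on the right-hand side being absolutely convergent. -/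
/-!
Write `a = ‖t‖`. The radial profile `a ^ (2ν) * exp (-r a ^ (2s))` is the restriction to the positive
axis of a function holomorphic in the right half-plane. Since `s < 1/2`, the factor
`exp (-r w ^ (2s))` decays there in every direction up to the imaginary axis, so the mean value
property of `w ↦ w ^ (2ν+1) * exp (-r w ^ (2s))`, transported to the unit disc by a Cayley map, gives
the Stieltjes-type formula (`stieltjes_representation`)
`a ^ (2ν) * exp (-r a ^ (2s)) = (2/π) ∫_{v > 0} h(v) / (a² + v²) dv`,
where `h` is an explicit damped oscillating kernel, the real part of the boundary values.

Expanding `1 / (a² + v²)` as `∫_{u > 0} exp (-u (a² + v²)) du` turns the profile into a superposition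
of Gaussians in `t`, whose Fourier transforms are `(π/u) ^ (p/2) * exp (-‖x‖² / (4u))`. The exchange
of integrals is not absolutely convergent as it stands; it is justified by inserting `exp (-ε ‖t‖²)`
and letting `ε → 0`, and the limit exists because the transformed Gaussians are bounded in `u` when
`x ≠ 0` (`integral_eq_mixing`).

Finally `h` is the sum of a series in the powers `v ^ (2 (s k + ν) + 1)`. Integrating one such power
gives the product of two Gamma functions (`mixed_moment`), and this is the `k`-th term of the
series. By log-convexity of `Gamma` the ratio of consecutive terms is bounded by `O(k ^ (2s - 1))`,
which yields absolute convergence and allows integration term by term (`integral_mixing_eq_tsum`).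
-/

open MeasureTheory Real
open scoped RealInnerProductSpace

/-! ### A Poisson formula in the right half-plane -/

/-- The holomorphic extension to the right half-plane of `a` times the radial profile. The extra
factor `w` turns the Poisson kernel into the conjugate one, for which the resulting kernel carries a
sine; it also makes the function vanish at `0`. -/
noncomputable def halfPlaneFun (ν r s : ℝ) (w : ℂ) : ℂ :=
  w ^ ((2 * ν + 1 : ℝ) : ℂ) * Complex.exp (-r * w ^ ((2 * s : ℝ) : ℂ))

/-- The real part of `halfPlaneFun` at `∓ i v`, `v > 0`; its values at `v < 0` play no role. -/
noncomputable def stieltjesKernel (ν r s v : ℝ) : ℝ :=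
  v ^ (2 * ν + 1) * rexp (-(r * cos (π * s)) * v ^ (2 * s)) *
    sin (r * sin (π * s) * v ^ (2 * s) - π * ν)

lemma halfPlaneFun_continuousAt {ν r s : ℝ} (hν : 0 ≤ ν) (hs : 0 < s) {w : ℂ} (hw : 0 ≤ w.re) :
    ContinuousAt (halfPlaneFun ν r s) w := by
  have h1 := Complex.continuousAt_cpow_const_of_re_pos (w := ((2 * ν + 1 : ℝ) : ℂ)) (Or.inl hw)
    (by rw [Complex.ofReal_re]; positivity)
  have h2 := Complex.continuousAt_cpow_const_of_re_pos (w := ((2 * s : ℝ) : ℂ)) (Or.inl hw)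
    (by rw [Complex.ofReal_re]; positivity)
  exact h1.mul ((continuousAt_const.mul h2).cexp)

lemma halfPlaneFun_differentiableAt {ν r s : ℝ} {w : ℂ} (hw : 0 < w.re) :
    DifferentiableAt ℂ (halfPlaneFun ν r s) w := by
  have hm : w ∈ Complex.slitPlane := Or.inl hw
  have h (c : ℂ) : DifferentiableAt ℂ (fun z : ℂ => z ^ c) w :=
    differentiableAt_id.cpow (differentiableAt_const _) hm
  exact (h _).mul (((h _).const_mul _).cexp)

/-- On the closed right half-plane `w ^ (2s)` has argument in `[-πs, πs]`, an interval on which the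
cosine is at least `cos (πs) > 0`. -/
lemma halfPlaneFun_norm_le {ν r s : ℝ} (hr : 0 < r) (hs₁ : 0 < s) (hs₂ : s < 1 / 2)
    {w : ℂ} (hw : 0 ≤ w.re) :
    ‖halfPlaneFun ν r s w‖ ≤ ‖w‖ ^ (2 * ν + 1) * rexp (-(r * cos (π * s)) * ‖w‖ ^ (2 * s)) := by
  have harg : |w.arg| ≤ π / 2 := Complex.abs_arg_le_pi_div_two_iff.2 hw
  have hpow (y : ℝ) : ‖w ^ (y : ℂ)‖ = ‖w‖ ^ y := Complex.norm_cpow_real w y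
  rw [halfPlaneFun, norm_mul, hpow, Complex.norm_exp]
  gcongr
  have hre : (w ^ ((2 * s : ℝ) : ℂ)).re = ‖w‖ ^ (2 * s) * cos (w.arg * (2 * s)) := by
    rw [Complex.cpow_ofReal, Complex.re_ofReal_mul]
    simp only [Complex.add_re, Complex.mul_re, Complex.ofReal_re, Complex.ofReal_im, Complex.I_re,
      Complex.I_im]
    ring
  have hre' : (-(r : ℂ) * w ^ ((2 * s : ℝ) : ℂ)).re
      = -(r * (‖w‖ ^ (2 * s) * cos (w.arg * (2 * s)))) := by
    rw [← hre, ← Complex.ofReal_neg, Complex.re_ofReal_mul]; ring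
  rw [hre']
  have hcos : cos (π * s) ≤ cos (w.arg * (2 * s)) := by
    rw [← Real.cos_abs (w.arg * (2 * s))]
    apply Real.cos_le_cos_of_nonneg_of_le_pi (abs_nonneg _)
    · nlinarith [Real.pi_pos]
    · rw [abs_mul, abs_of_pos (by positivity : 0 < 2 * s)]
      nlinarith
  have h0 : 0 ≤ r * ‖w‖ ^ (2 * s) := by positivity
  nlinarith [mul_le_mul_of_nonneg_left hcos h0]

/-- The boundary values on the imaginary axis. They are even in `v`, since `halfPlaneFun` commutes
with complex conjugation. -/
lemma halfPlaneFun_neg_I_re {ν r s : ℝ} (hν : 0 ≤ ν) (v : ℝ) :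
    (halfPlaneFun ν r s (-(v * Complex.I))).re = stieltjesKernel ν r s |v| := by
  have key (e : ℝ) (he : e = 1 ∨ e = -1) {t : ℝ} (ht : 0 < t) :
      (halfPlaneFun ν r s (e * (t * Complex.I))).re = stieltjesKernel ν r s t := by
    have hn : ‖(e : ℂ) * (t * Complex.I)‖ = t := by
      rcases he with rfl | rfl <;> simp [abs_of_pos ht]
    have ha : ((e : ℂ) * (t * Complex.I)).arg = e * (π / 2) := by
      rcases he with rfl | rfl
      · simpa using Complex.arg_real_mul Complex.I ht
      · have := Complex.arg_real_mul (-Complex.I) ht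
        rw [Complex.arg_neg_I] at this
        simpa using this
    have hc (z : ℝ) : cos (e * z) = cos z := by rcases he with rfl | rfl <;> simp
    have hsn (z : ℝ) : sin (e * z) = e * sin z := by rcases he with rfl | rfl <;> simp
    rw [halfPlaneFun, Complex.cpow_ofReal, Complex.cpow_ofReal, hn, ha,
      show e * (π / 2) * (2 * s) = e * (π * s) by ring,
      show e * (π / 2) * (2 * ν + 1) = e * (π * ν + π / 2) by ring, hc, hsn, hc, hsn, stieltjesKernel,
      cos_add_pi_div_two, sin_add_pi_div_two, sin_sub]
    have hexp : Complex.exp (-r * (((t ^ (2 * s) : ℝ) : ℂ) * (((cos (π * s) : ℝ) : ℂ) +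
        ((e * sin (π * s) : ℝ) : ℂ) * Complex.I))) =
        ((rexp (-(r * cos (π * s)) * t ^ (2 * s)) : ℝ) : ℂ) *
          (((cos (r * sin (π * s) * t ^ (2 * s)) : ℝ) : ℂ) -
            ((e * sin (r * sin (π * s) * t ^ (2 * s)) : ℝ) : ℂ) * Complex.I) := by
      have h0 := Complex.exp_add_mul_I ((-(r * cos (π * s)) * t ^ (2 * s) : ℝ) : ℂ)
        ((e * -(r * sin (π * s) * t ^ (2 * s)) : ℝ) : ℂ)
      rw [← Complex.ofReal_exp, ← Complex.ofReal_cos, ← Complex.ofReal_sin, hc, hsn, cos_neg,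
        sin_neg] at h0
      convert h0 using 1
      · congr 1
        push_cast
        ring
      · push_cast
        ring
    rw [hexp]
    have he2 : e * e = 1 := by rcases he with rfl | rfl <;> norm_num
    simp only [Complex.mul_re, Complex.add_re, Complex.sub_re, Complex.sub_im, Complex.add_im,
      Complex.mul_im, Complex.ofReal_re, Complex.ofReal_im, Complex.I_re, Complex.I_im]
    linear_combination (t ^ (2 * ν + 1) * rexp (-(r * cos (π * s)) * t ^ (2 * s)) *
      cos (π * ν) * sin (r * sin (π * s) * t ^ (2 * s))) * he2
  rcases lt_trichotomy v 0 with h | h | h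
  · have := key 1 (Or.inl rfl) (neg_pos.2 h)
    rw [abs_of_neg h, ← this]; congr 2; push_cast; ring
  · subst h
    have : 2 * ν + 1 ≠ 0 := by positivity
    have h2 : ((2 * ν + 1 : ℝ) : ℂ) ≠ 0 := by exact_mod_cast this
    simp only [halfPlaneFun, stieltjesKernel, abs_zero, Real.zero_rpow this, Complex.ofReal_zero, zero_mul, neg_zero, Complex.zero_cpow h2, Complex.zero_re]
  · have := key (-1) (Or.inr rfl) h
    rw [abs_of_pos h, ← this]; congr 2; push_cast; ring

lemma halfPlane_bound_tendsto {ν c s : ℝ} (hc : 0 < c) (hs : 0 < s) :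
    Filter.Tendsto (fun t : ℝ => t ^ (2 * ν + 1) * rexp (-c * t ^ (2 * s)))
      Filter.atTop (nhds 0) := by
  have h := (tendsto_rpow_mul_exp_neg_mul_atTop_nhds_zero ((2 * ν + 1) / (2 * s)) c hc).comp
    (tendsto_rpow_atTop (by positivity : 0 < 2 * s))
  refine h.congr' ?_
  filter_upwards [Filter.eventually_gt_atTop 0] with t ht
  simp only [Function.comp]
  rw [← Real.rpow_mul ht.le, mul_div_cancel₀ _ (by positivity)]

lemma cayley_re {ζ : ℂ} (a : ℝ) : ((a : ℂ) * ((1 + ζ) / (1 - ζ))).re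
    = a * (1 - ‖ζ‖ ^ 2) / ‖1 - ζ‖ ^ 2 := by
  rw [Complex.re_ofReal_mul, Complex.div_re, ← Complex.normSq_eq_norm_sq, ← Complex.normSq_eq_norm_sq]
  simp [Complex.normSq_apply]
  ring

/-- The mean value property of `halfPlaneFun` after the Cayley map `ζ ↦ a (1 + ζ) / (1 - ζ)`, which
sends the unit disc to the right half-plane and `0` to `a`. The boundary point `ζ = 1` corresponds to
infinity, where `halfPlaneFun` tends to `0`. -/
lemma halfPlane_mean {ν r s : ℝ} (hν : 0 ≤ ν) (hr : 0 < r) (hs₁ : 0 < s) (hs₂ : s < 1 / 2)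
    {a : ℝ} (ha : 0 < a) :
    Real.circleAverage
      (fun ζ => (halfPlaneFun ν r s (a * ((1 + ζ) / (1 - ζ)))).re) 0 1 =
        a ^ (2 * ν + 1) * rexp (-r * a ^ (2 * s)) := by
  have hc : 0 < r * cos (π * s) :=
    mul_pos hr (cos_pos_of_mem_Ioo ⟨by nlinarith [pi_pos], by nlinarith [pi_pos]⟩)
  set φ : ℂ → ℂ := fun ζ => halfPlaneFun ν r s (a * ((1 + ζ) / (1 - ζ))) with hφ
  have hne {ζ : ℂ} (h : ζ ≠ 1) : 1 - ζ ≠ 0 := sub_ne_zero.2 h.symm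
  have hre {ζ : ℂ} (h : ‖ζ‖ ≤ 1) : 0 ≤ ((a : ℂ) * ((1 + ζ) / (1 - ζ))).re := by
    rw [cayley_re]
    have : 0 ≤ 1 - ‖ζ‖ ^ 2 := by nlinarith [norm_nonneg ζ]
    positivity
  -- Division by zero sends `ζ = 1` to `w = 0`, where `halfPlaneFun` vanishes: this is the value that
  -- continuity at `ζ = 1` requires.
  have hzero : φ 1 = 0 := by
    have : ((2 * ν + 1 : ℝ) : ℂ) ≠ 0 := by exact_mod_cast (by positivity : 2 * ν + 1 ≠ 0)
    simp only [hφ, sub_self, div_zero, mul_zero, halfPlaneFun, Complex.zero_cpow this, zero_mul]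
  have hcont : ContinuousOn φ (Metric.closedBall 0 1) := by
    intro ζ hζ
    rw [mem_closedBall_zero_iff] at hζ
    rcases eq_or_ne ζ 1 with rfl | h
    · rw [← continuousWithinAt_sdiff_self, ContinuousWithinAt, hzero]
      have hmem : ∀ᶠ ζ in nhdsWithin (1 : ℂ) (Metric.closedBall 0 1 \ {1}),
          ‖ζ‖ ≤ 1 ∧ ζ ≠ 1 := by
        filter_upwards [self_mem_nhdsWithin] with ζ h
        exact ⟨mem_closedBall_zero_iff.1 h.1, h.2⟩
      refine squeeze_zero_norm' (a := fun ζ : ℂ =>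
        ‖(a : ℂ) * ((1 + ζ) / (1 - ζ))‖ ^ (2 * ν + 1) *
          rexp (-(r * cos (π * s)) * ‖(a : ℂ) * ((1 + ζ) / (1 - ζ))‖ ^ (2 * s))) ?_ ?_
      · filter_upwards [hmem] with ζ h
        exact halfPlaneFun_norm_le hr hs₁ hs₂ (hre h.1)
      · refine (halfPlane_bound_tendsto hc hs₁).comp ?_
        have h1 : Filter.Tendsto (fun ζ : ℂ => ‖(a : ℂ) * (1 + ζ)‖)
            (nhdsWithin (1 : ℂ) (Metric.closedBall 0 1 \ {1})) (nhds ‖(a : ℂ) * (1 + 1)‖) := by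
          apply Filter.Tendsto.mono_left _ nhdsWithin_le_nhds
          exact Continuous.tendsto (by fun_prop) 1
        have h2 : Filter.Tendsto (fun ζ : ℂ => ‖1 - ζ‖)
            (nhdsWithin (1 : ℂ) (Metric.closedBall 0 1 \ {1})) (nhdsWithin 0 (Set.Ioi 0)) := by
          refine tendsto_nhdsWithin_iff.2 ⟨?_, ?_⟩
          · apply Filter.Tendsto.mono_left _ nhdsWithin_le_nhds
            have : Continuous fun ζ : ℂ => ‖1 - ζ‖ := by fun_prop
            simpa using this.tendsto 1
          · filter_upwards [hmem] with ζ h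
            exact norm_pos_iff.2 (hne h.2)
        have h3 : 0 < ‖(a : ℂ) * (1 + 1)‖ := by
          rw [norm_pos_iff]
          have : (a : ℂ) ≠ 0 := by exact_mod_cast ha.ne'
          norm_num [this]
        refine (h1.pos_mul_atTop h3 h2.inv_tendsto_nhdsGT_zero).congr fun ζ => ?_
        rw [← mul_div_assoc, norm_div]
        rfl
    · refine ContinuousAt.continuousWithinAt ?_
      refine ContinuousAt.comp (f := fun ζ : ℂ => (a : ℂ) * ((1 + ζ) / (1 - ζ)))
        (halfPlaneFun_continuousAt hν hs₁ (hre hζ)) ?_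
      exact continuousAt_const.mul ((continuousAt_const.add continuousAt_id).div
        (continuousAt_const.sub continuousAt_id) (hne h))
  have hdiff : ∀ ζ ∈ Metric.ball (0 : ℂ) 1, DifferentiableAt ℂ φ ζ := by
    intro ζ hζ
    rw [mem_ball_zero_iff] at hζ
    have h : ζ ≠ 1 := by rintro rfl; simp at hζ
    have hpos : 0 < ((a : ℂ) * ((1 + ζ) / (1 - ζ))).re := by
      rw [cayley_re]
      have : 0 < 1 - ‖ζ‖ ^ 2 := by nlinarith [norm_nonneg ζ]
      have : 0 < ‖1 - ζ‖ := norm_pos_iff.2 (hne h)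
      positivity
    refine DifferentiableAt.comp (f := fun ζ : ℂ => (a : ℂ) * ((1 + ζ) / (1 - ζ))) ζ
        (halfPlaneFun_differentiableAt hpos) ?_
    exact (differentiableAt_const _).mul (((differentiableAt_const _).add differentiableAt_id).div
        ((differentiableAt_const _).sub differentiableAt_id) (hne h))
  have hmean := circleAverage_of_differentiable_on_off_countable (f := φ) (c := 0) (R := 1)
    Set.countable_empty (by simpa using hcont) (by simpa using hdiff)
  have hint : CircleIntegrable φ 0 1 := by
    apply ContinuousOn.circleIntegrable zero_le_one
    exact hcont.mono Metric.sphere_subset_closedBall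
  have hval : φ 0 = ((a ^ (2 * ν + 1) * rexp (-r * a ^ (2 * s)) : ℝ) : ℂ) := by
    simp only [hφ, halfPlaneFun, add_zero, sub_zero, div_one, mul_one]
    rw [← Complex.ofReal_cpow ha.le, ← Complex.ofReal_cpow ha.le]
    push_cast
    rfl
  have := Complex.reCLM.circleAverage_comp_comm hint
  rw [hmean, hval, Complex.reCLM_apply, Complex.ofReal_re] at this
  exact this

lemma cayley_circleMap (x : ℝ) :
    (1 + circleMap 0 1 (π + 2 * arctan x)) / (1 - circleMap 0 1 (π + 2 * arctan x))
      = -(x * Complex.I) := by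
  set θ := arctan x with hθ
  have hc : cos θ ≠ 0 := (cos_arctan_pos x).ne'
  have hx : x = sin θ / cos θ := by rw [← tan_eq_sin_div_cos, hθ, tan_arctan]
  have hm : circleMap 0 1 (π + 2 * θ) = -(((cos θ : ℝ) : ℂ) + ((sin θ : ℝ) : ℂ) * Complex.I) ^ 2 := by
    rw [circleMap]
    push_cast
    rw [← Complex.exp_mul_I, ← Complex.exp_nat_mul,
      show ((π : ℂ) + 2 * θ) * Complex.I = π * Complex.I + (2 : ℕ) * (θ * Complex.I) by
        push_cast; ring, Complex.exp_add, Complex.exp_pi_mul_I]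
    ring
  have hcs : ((cos θ : ℝ) : ℂ) ^ 2 + ((sin θ : ℝ) : ℂ) ^ 2 = 1 := by
    exact_mod_cast cos_sq_add_sin_sq θ
  have hc' : ((cos θ : ℝ) : ℂ) ≠ 0 := by exact_mod_cast hc
  have hden : 1 - circleMap 0 1 (π + 2 * θ)
      = 2 * (cos θ : ℝ) * ((cos θ : ℝ) + (sin θ : ℝ) * Complex.I) := by
    rw [hm]
    linear_combination (-1 : ℂ) * hcs + ((sin θ : ℝ) : ℂ) ^ 2 * Complex.I_sq
  have hnum : 1 + circleMap 0 1 (π + 2 * θ)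
      = -(2 * (sin θ : ℝ) * Complex.I) * ((cos θ : ℝ) + (sin θ : ℝ) * Complex.I) := by
    rw [hm]
    linear_combination (-1 : ℂ) * hcs + ((sin θ : ℝ) : ℂ) ^ 2 * Complex.I_sq
  have hne : ((cos θ : ℝ) : ℂ) + (sin θ : ℝ) * Complex.I ≠ 0 := by
    rw [Complex.ofReal_cos, Complex.ofReal_sin, ← Complex.exp_mul_I]
    exact Complex.exp_ne_zero _
  rw [hden, hnum, mul_div_mul_right _ _ hne, hx, Complex.ofReal_div]
  field_simp

/-- The substitution `θ = π + 2 arctan (v / a)` turns the average over the unit circle into the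
Poisson integral over the imaginary axis. -/
lemma circleAverage_cayley (f : ℂ → ℝ) {a : ℝ} (ha : 0 < a) :
    Real.circleAverage (fun ζ => f (a * ((1 + ζ) / (1 - ζ)))) 0 1 =
      (1 / π) * ∫ v : ℝ, a / (a ^ 2 + v ^ 2) * f (-(v * Complex.I)) := by
  have himage : (fun v : ℝ => π + 2 * arctan (v / a)) '' Set.univ = Set.Ioo 0 (2 * π) := by
    ext y
    simp only [Set.image_univ, Set.mem_range, Set.mem_Ioo]
    constructor
    · rintro ⟨v, rfl⟩
      constructor <;> nlinarith [neg_pi_div_two_lt_arctan (v / a), arctan_lt_pi_div_two (v / a)]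
    · rintro ⟨h1, h2⟩
      refine ⟨a * tan ((y - π) / 2), ?_⟩
      rw [mul_div_cancel_left₀ _ ha.ne', arctan_tan (by linarith) (by linarith)]
      ring
  have hderiv : ∀ v ∈ Set.univ, HasDerivWithinAt (fun v : ℝ => π + 2 * arctan (v / a))
      (2 * (1 / (1 + (v / a) ^ 2) * (1 / a))) Set.univ v := fun v _ =>
    ((((hasDerivAt_id v).div_const a).arctan.const_mul 2).const_add π).hasDerivWithinAt
  have hinj : Set.InjOn (fun v : ℝ => π + 2 * arctan (v / a)) Set.univ := by
    intro v _ w _ h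
    have h' : arctan (v / a) = arctan (w / a) := by simpa using h
    exact (div_left_inj' ha.ne').1 (arctan_injective h')
  have hcv := integral_image_eq_integral_abs_deriv_smul MeasurableSet.univ hderiv hinj
    (fun θ => f (a * ((1 + circleMap 0 1 θ) / (1 - circleMap 0 1 θ))))
  rw [himage, ← integral_Ioc_eq_integral_Ioo, ← intervalIntegral.integral_of_le (by positivity),
    Measure.restrict_univ] at hcv
  rw [Real.circleAverage_def, hcv, smul_eq_mul, ← integral_const_mul, ← integral_const_mul]
  congr 1
  ext v
  rw [cayley_circleMap, smul_eq_mul, abs_of_pos (by positivity)]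
  have ha' : (a : ℂ) ≠ 0 := by exact_mod_cast ha.ne'
  have hz : (a : ℂ) * -(((v / a : ℝ) : ℂ) * Complex.I) = -(v * Complex.I) := by
    push_cast
    field_simp
  rw [hz]
  field_simp

/-- The Poisson formula at `a`, divided by `a` and folded onto `v > 0`. -/
lemma stieltjes_representation {ν r s : ℝ} (hν : 0 ≤ ν) (hr : 0 < r) (hs₁ : 0 < s)
    (hs₂ : s < 1 / 2) {a : ℝ} (ha : 0 < a) :
    a ^ (2 * ν) * rexp (-r * a ^ (2 * s)) =
      (2 / π) * ∫ v in Set.Ioi (0 : ℝ), stieltjesKernel ν r s v / (a ^ 2 + v ^ 2) := by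
  have h1 := halfPlane_mean hν hr hs₁ hs₂ ha
  rw [circleAverage_cayley (fun w => (halfPlaneFun ν r s w).re) ha] at h1
  simp only [halfPlaneFun_neg_I_re hν] at h1
  have h2 := integral_comp_abs (f := fun v => a / (a ^ 2 + v ^ 2) * stieltjesKernel ν r s v)
  simp only [sq_abs] at h2
  have h3 : ∫ v in Set.Ioi (0 : ℝ), a / (a ^ 2 + v ^ 2) * stieltjesKernel ν r s v
      = a * ∫ v in Set.Ioi (0 : ℝ), stieltjesKernel ν r s v / (a ^ 2 + v ^ 2) := by
    rw [← integral_const_mul]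
    congr 1
    ext v
    ring
  rw [h2, h3, Real.rpow_add_one ha.ne'] at h1
  have := ha.ne'
  apply mul_left_cancel₀ this
  linear_combination -h1

/-! ### The profile as a superposition of Gaussians -/

lemma stieltjesKernel_measurable (ν r s : ℝ) : Measurable (stieltjesKernel ν r s) := by
  unfold stieltjesKernel
  fun_prop

/-- The only delicate point is `v = 0`, where the monomial factor divided by `v ^ 2` is
`v ^ (2ν - 1)`: for `ν = 0` this is not integrable, and the vanishing of the sine at `v = 0` is
needed. -/
lemma stieltjesKernel_div_sq_integrableOn {ν r s : ℝ} (hν : 0 ≤ ν) (hr : 0 < r) (hs₁ : 0 < s)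
    (hs₂ : s < 1 / 2) :
    IntegrableOn (fun v => stieltjesKernel ν r s v / v ^ 2) (Set.Ioi 0) := by
  have hc : 0 < r * cos (π * s) :=
    mul_pos hr (cos_pos_of_mem_Ioo ⟨by nlinarith [pi_pos], by nlinarith [pi_pos]⟩)
  set c := r * cos (π * s) with hcdef
  set B := |r * sin (π * s)| with hB
  have hi1 : IntegrableOn (fun v : ℝ => |sin (π * ν)| * (v ^ (2 * ν - 1) * rexp (-c * v ^ (2 * s))))
      (Set.Ioi 0) := by
    rcases hν.eq_or_lt with h | h
    · simp [← h]
    · exact (integrableOn_rpow_mul_exp_neg_mul_rpow (by linarith) (by positivity) hc).const_mul _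
  have hi2 : IntegrableOn
      (fun v : ℝ => B * (v ^ (2 * ν + 2 * s - 1) * rexp (-c * v ^ (2 * s)))) (Set.Ioi 0) :=
    (integrableOn_rpow_mul_exp_neg_mul_rpow (by linarith) (by positivity) hc).const_mul _
  refine (hi1.add hi2).mono'
    ((stieltjesKernel_measurable ν r s).div (by fun_prop)).aestronglyMeasurable ?_
  filter_upwards [ae_restrict_mem measurableSet_Ioi] with v hv
  have hv : 0 < v := hv
  -- the phase is within `B v ^ (2 s)` of `-π ν`, and the sine is 1-Lipschitz
  have hsin : |sin (r * sin (π * s) * v ^ (2 * s) - π * ν)| ≤ |sin (π * ν)| + B * v ^ (2 * s) := by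
    rw [sin_sub]
    have h1 : |sin (r * sin (π * s) * v ^ (2 * s))| ≤ B * v ^ (2 * s) := by
      refine (Real.abs_sin_le_abs).trans ?_
      rw [abs_mul, abs_of_pos (rpow_pos_of_pos hv _)]
    calc _ ≤ |sin (r * sin (π * s) * v ^ (2 * s)) * cos (π * ν)|
          + |cos (r * sin (π * s) * v ^ (2 * s)) * sin (π * ν)| := abs_sub _ _
      _ ≤ B * v ^ (2 * s) * 1 + 1 * |sin (π * ν)| := by
        rw [abs_mul, abs_mul]
        gcongr
        · exact abs_cos_le_one _
        · exact abs_cos_le_one _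
      _ = _ := by ring
  have e1 : v ^ (2 * ν + 1) / v ^ 2 = v ^ (2 * ν - 1) := by
    rw [← Real.rpow_natCast v 2, ← Real.rpow_sub hv]
    congr 1
    push_cast
    ring
  have e2 : v ^ (2 * ν + 2 * s - 1) = v ^ (2 * ν - 1) * v ^ (2 * s) := by
    rw [← Real.rpow_add hv]
    congr 1
    ring
  have e3 : ‖stieltjesKernel ν r s v / v ^ 2‖ = v ^ (2 * ν - 1) * rexp (-c * v ^ (2 * s)) *
      |sin (r * sin (π * s) * v ^ (2 * s) - π * ν)| := by
    rw [← e1, stieltjesKernel, norm_eq_abs, abs_div, abs_mul, abs_mul, abs_exp,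
      abs_of_pos (rpow_pos_of_pos hv _), abs_of_pos (pow_pos hv 2)]
    ring
  rw [e3, Pi.add_apply, e2]
  calc _ ≤ v ^ (2 * ν - 1) * rexp (-c * v ^ (2 * s)) * (|sin (π * ν)| + B * v ^ (2 * s)) := by
        gcongr
    _ = _ := by ring

lemma integral_exp_neg_mul {b : ℝ} (hb : 0 < b) :
    ∫ u in Set.Ioi (0 : ℝ), rexp (-(u * b)) = 1 / b := by
  have := integral_exp_mul_Ioi (neg_lt_zero.2 hb) 0
  simp only [mul_zero, exp_zero] at this
  rw [div_neg, neg_div, neg_neg] at this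
  rw [← this]
  congr 1 with u
  ring_nf

lemma integrableOn_exp_neg_mul {b : ℝ} (hb : 0 < b) :
    IntegrableOn (fun u : ℝ => rexp (-(u * b))) (Set.Ioi 0) := by
  refine (integrableOn_exp_mul_Ioi (neg_lt_zero.2 hb) 0).congr_fun ?_ measurableSet_Ioi
  intro u _
  simp only
  ring_nf

/-- Lebesgue measure on the open positive quadrant of `ℝ²`. -/
noncomputable abbrev quadrant : Measure (ℝ × ℝ) :=
  (volume.restrict (Set.Ioi (0 : ℝ))).prod (volume.restrict (Set.Ioi (0 : ℝ)))

lemma ae_quadrant : ∀ᵐ q ∂quadrant, 0 < q.1 ∧ 0 < q.2 := by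
  rw [quadrant, Measure.prod_restrict]
  filter_upwards [ae_restrict_mem (measurableSet_Ioi.prod measurableSet_Ioi)] with q hq
  exact hq

/-- The density that writes the radial profile as a signed superposition of Gaussians `exp (-u a²)`.
The argument is `q = (v, u)`, and `1 / (a² + v²)` has been expanded as `∫ exp (-u (a² + v²)) du`. -/
noncomputable def mixing (ν r s : ℝ) (q : ℝ × ℝ) : ℝ :=
  stieltjesKernel ν r s q.1 * rexp (-(q.2 * q.1 ^ 2))

lemma mixing_measurable (ν r s : ℝ) : Measurable (mixing ν r s) :=
  ((stieltjesKernel_measurable ν r s).comp measurable_fst).mul (by fun_prop)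

lemma mixing_integrable {ν r s : ℝ} (hν : 0 ≤ ν) (hr : 0 < r) (hs₁ : 0 < s) (hs₂ : s < 1 / 2) :
    Integrable (mixing ν r s) quadrant := by
  rw [quadrant, integrable_prod_iff (mixing_measurable ν r s).aestronglyMeasurable]
  constructor
  · filter_upwards [ae_restrict_mem measurableSet_Ioi] with v hv
    exact (integrableOn_exp_neg_mul (pow_pos hv 2)).const_mul (stieltjesKernel ν r s v)
  · refine (stieltjesKernel_div_sq_integrableOn hν hr hs₁ hs₂).norm.congr ?_
    filter_upwards [ae_restrict_mem measurableSet_Ioi] with v hv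
    have hv : 0 < v := hv
    simp only [mixing, norm_mul, norm_div, Real.norm_eq_abs, abs_exp]
    rw [integral_const_mul, integral_exp_neg_mul (pow_pos hv 2), abs_of_pos (pow_pos hv 2)]
    ring

/-- The radial profile of the integrand is a superposition of Gaussians in `a`. -/
lemma mixing_laplace {ν r s : ℝ} (hν : 0 ≤ ν) (hr : 0 < r) (hs₁ : 0 < s) (hs₂ : s < 1 / 2)
    {a : ℝ} (ha : 0 < a) :
    a ^ (2 * ν) * rexp (-r * a ^ (2 * s)) =
      (2 / π) * ∫ q, mixing ν r s q * rexp (-(q.2 * a ^ 2)) ∂quadrant := by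
  have hint : Integrable (fun q => mixing ν r s q * rexp (-(q.2 * a ^ 2))) quadrant := by
    refine (mixing_integrable hν hr hs₁ hs₂).mul_bdd (c := 1) (by fun_prop) ?_
    filter_upwards [ae_quadrant] with q hq
    rw [norm_eq_abs, abs_exp, exp_le_one_iff]
    have := hq.2
    nlinarith [sq_nonneg a]
  rw [stieltjes_representation hν hr hs₁ hs₂ ha, quadrant, integral_prod _ hint]
  congr 1
  refine setIntegral_congr_fun measurableSet_Ioi fun v hv => ?_
  have hv : 0 < v := hv
  simp only [mixing]
  have : ∀ u : ℝ, stieltjesKernel ν r s v * rexp (-(u * v ^ 2)) * rexp (-(u * a ^ 2))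
      = stieltjesKernel ν r s v * rexp (-(u * (a ^ 2 + v ^ 2))) := fun u => by
    rw [mul_assoc, ← exp_add]
    ring_nf
  simp only [this]
  rw [integral_const_mul, integral_exp_neg_mul (by positivity)]
  ring

/-! ### Fourier transform of the superposition -/

/-- The Fourier transform of `exp (-u ‖t‖²)` in dimension `2 d`, at a point `x` with
`‖x‖² = 4 X`. -/
noncomputable def gaussFourier (d X u : ℝ) : ℝ := (π / u) ^ d * rexp (-(X / u))

lemma gaussFourier_measurable (d X : ℝ) : Measurable (gaussFourier d X) := by
  unfold gaussFourier
  fun_prop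

/-- Uniform boundedness in `u` holds because `exp (-X / u)` with `X > 0` suppresses the singularity
of `(π / u) ^ d` at `u = 0`; this is where `x ≠ 0` is used. -/
lemma gaussFourier_bounded {d X : ℝ} (hd : 0 < d) (hX : 0 < X) :
    ∃ C, ∀ u, 0 < u → |gaussFourier d X u| ≤ C := by
  refine ⟨(π * d / X) ^ d, fun u hu => ?_⟩
  rw [gaussFourier, abs_of_pos (by positivity), exp_neg, ← div_eq_mul_inv, div_le_iff₀ (exp_pos _)]
  have h1 : π / u ≤ (π * d / X) * rexp (X / u / d) := by
    have := (Real.add_one_le_exp (X / u / d))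
    calc π / u = (π * d / X) * (X / u / d) := by field_simp
      _ ≤ _ := by gcongr; linarith
  calc (π / u) ^ d ≤ ((π * d / X) * rexp (X / u / d)) ^ d := by gcongr
    _ = _ := by
      rw [mul_rpow (by positivity) (exp_pos _).le, ← exp_mul, div_mul_cancel₀ _ hd.ne']

lemma integral_cos_gauss {p : ℕ} (x : EuclideanSpace ℝ (Fin p)) {u : ℝ} (hu : 0 < u) :
    ∫ t : EuclideanSpace ℝ (Fin p), cos ⟪t, x⟫ * rexp (-(u * ‖t‖ ^ 2)) =
      gaussFourier (p / 2) (‖x‖ ^ 2 / 4) u := by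
  have hu' : 0 < ((u : ℝ) : ℂ).re := by simpa
  have h1 := GaussianFourier.integral_cexp_neg_mul_sq_norm_add hu' Complex.I x
  have h2 := GaussianFourier.integrable_cexp_neg_mul_sq_norm_add hu' Complex.I x
  have h3 := integral_re h2
  rw [h1] at h3
  have h4 : ∀ t : EuclideanSpace ℝ (Fin p), RCLike.re (Complex.exp (-(u : ℂ) * ‖t‖ ^ 2 +
      Complex.I * (⟪x, t⟫ : ℝ))) = cos ⟪t, x⟫ * rexp (-(u * ‖t‖ ^ 2)) := fun t => by
    rw [show -(u : ℂ) * ‖t‖ ^ 2 + Complex.I * (⟪x, t⟫ : ℝ)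
      = ((-(u * ‖t‖ ^ 2) : ℝ) : ℂ) + ((⟪x, t⟫ : ℝ) : ℂ) * Complex.I by push_cast; ring,
      RCLike.re_eq_complex_re, Complex.exp_re, real_inner_comm,
      Complex.add_re, Complex.add_im, Complex.re_ofReal_mul,
      Complex.im_ofReal_mul, Complex.I_re, Complex.I_im, Complex.ofReal_re, Complex.ofReal_im, mul_zero,
      add_zero, zero_add, mul_one, mul_comm]
  simp only [h4] at h3
  rw [h3, gaussFourier]
  have h5 : ((π : ℂ) / u) ^ ((Module.finrank ℝ (EuclideanSpace ℝ (Fin p)) : ℂ) / 2) *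
      Complex.exp (Complex.I ^ 2 * ‖x‖ ^ 2 / (4 * u)) =
      (((π / u) ^ ((p : ℝ) / 2) * rexp (-(‖x‖ ^ 2 / 4 / u)) : ℝ) : ℂ) := by
    rw [finrank_euclideanSpace_fin, Complex.ofReal_mul, Complex.ofReal_cpow (by positivity),
      Complex.ofReal_exp]
    push_cast
    congr 2
    rw [Complex.I_sq]
    field_simp
  rw [h5, RCLike.re_eq_complex_re, Complex.ofReal_re]

lemma integrable_gauss {p : ℕ} {u : ℝ} (hu : 0 < u) :
    Integrable (fun t : EuclideanSpace ℝ (Fin p) => rexp (-(u * ‖t‖ ^ 2))) := by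
  have hu' : 0 < ((u : ℝ) : ℂ).re := by simpa
  have h2 := (GaussianFourier.integrable_cexp_neg_mul_sq_norm_add (V := EuclideanSpace ℝ (Fin p))
    hu' 0 0).norm
  refine h2.congr (Filter.Eventually.of_forall fun t => ?_)
  simp only [Complex.norm_exp]
  congr 1
  rw [zero_mul, add_zero, ← Complex.ofReal_pow, ← Complex.ofReal_neg, Complex.re_ofReal_mul,
    Complex.ofReal_re, neg_mul]

/-- With the convergence factor `exp (-ε ‖t‖²)` the triple integral in `t`, `v`, `u` is absolutely
convergent, so Fubini's theorem applies. -/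
lemma integral_regularized {p : ℕ} {ν r s : ℝ} (hν : 0 ≤ ν) (hr : 0 < r) (hs₁ : 0 < s) (hs₂ : s < 1 / 2)
    {x : EuclideanSpace ℝ (Fin p)} (hx : x ≠ 0) {ε : ℝ} (hε : 0 < ε) :
    ∫ t : EuclideanSpace ℝ (Fin p), cos ⟪t, x⟫ * (‖t‖ ^ (2 * ν) * rexp (-r * ‖t‖ ^ (2 * s))) *
        rexp (-(ε * ‖t‖ ^ 2)) =
      (2 / π) * ∫ q, mixing ν r s q * gaussFourier (p / 2) (‖x‖ ^ 2 / 4) (q.2 + ε) ∂quadrant := by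
  have : Nontrivial (EuclideanSpace ℝ (Fin p)) := ⟨x, 0, hx⟩
  set F : EuclideanSpace ℝ (Fin p) → ℝ × ℝ → ℝ := fun t q =>
    (cos ⟪t, x⟫ * rexp (-(ε * ‖t‖ ^ 2))) * (mixing ν r s q * rexp (-(q.2 * ‖t‖ ^ 2))) with hF
  have hint : Integrable (Function.uncurry F) (volume.prod quadrant) := by
    refine ((integrable_gauss (p := p) hε).mul_prod (mixing_integrable hν hr hs₁ hs₂)).mono ?_ ?_
    · have := mixing_measurable ν r s
      refine Measurable.aestronglyMeasurable ?_
      simp only [hF, Function.uncurry_def]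
      fun_prop
    · have hq : ∀ᵐ z ∂((volume : Measure (EuclideanSpace ℝ (Fin p))).prod quadrant),
          0 < z.2.1 ∧ 0 < z.2.2 := Measure.quasiMeasurePreserving_snd.ae ae_quadrant
      filter_upwards [hq] with z hz
      simp only [hF, Function.uncurry, norm_mul, Real.norm_eq_abs, abs_exp]
      have h1 := abs_cos_le_one ⟪z.1, x⟫
      have h2 : rexp (-(z.2.2 * ‖z.1‖ ^ 2)) ≤ 1 := by
        rw [exp_le_one_iff]
        have := hz.2
        nlinarith [sq_nonneg ‖z.1‖]
      calc _ ≤ 1 * rexp (-(ε * ‖z.1‖ ^ 2)) * (|mixing ν r s z.2| * 1) := by gcongr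
        _ = _ := by ring
  have hswap := integral_integral_swap hint
  calc _ = ∫ t, (2 / π) * ∫ q, F t q ∂quadrant := by
        refine integral_congr_ae ?_
        filter_upwards [Measure.ae_ne volume (0 : EuclideanSpace ℝ (Fin p))] with t ht
        rw [mixing_laplace hν hr hs₁ hs₂ (norm_pos_iff.2 ht)]
        simp only [hF]
        rw [integral_const_mul]
        ring
    _ = (2 / π) * ∫ q, (∫ t, F t q) ∂quadrant := by rw [integral_const_mul, hswap]
    _ = _ := by
        congr 1
        refine integral_congr_ae ?_
        filter_upwards [ae_quadrant] with q hq
        have hpos : 0 < q.2 + ε := add_pos hq.2 hε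
        rw [← integral_cos_gauss x hpos, ← integral_const_mul]
        congr 1 with t
        simp only [hF]
        rw [add_mul, neg_add, exp_add]
        ring

lemma radial_integrable {p : ℕ} {ν r s : ℝ} (hν : 0 ≤ ν) (hr : 0 < r) (hs₁ : 0 < s)
    {x : EuclideanSpace ℝ (Fin p)} (hx : x ≠ 0) :
    Integrable (fun t : EuclideanSpace ℝ (Fin p) =>
      ‖t‖ ^ (2 * ν) * rexp (-r * ‖t‖ ^ (2 * s))) := by
  have : Nontrivial (EuclideanSpace ℝ (Fin p)) := ⟨x, 0, hx⟩
  rw [integrable_fun_norm_addHaar volume (f := fun y : ℝ => y ^ (2 * ν) * rexp (-r * y ^ (2 * s)))]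
  set n := Module.finrank ℝ (EuclideanSpace ℝ (Fin p)) - 1
  have hn : (-1 : ℝ) < n + 2 * ν := by
    have : (0 : ℝ) ≤ n := n.cast_nonneg
    linarith
  refine (integrableOn_rpow_mul_exp_neg_mul_rpow hn (by positivity : 0 < 2 * s) hr).congr_fun ?_
    measurableSet_Ioi
  intro y hy
  have hy : 0 < y := hy
  simp only [smul_eq_mul]
  rw [rpow_add hy, rpow_natCast]
  ring

/-- The limit `ε → 0` of `integral_regularized`: both sides pass to the limit by dominated
convergence. -/
lemma integral_eq_mixing {p : ℕ} {ν r s : ℝ} (hν : 0 ≤ ν) (hr : 0 < r) (hs₁ : 0 < s) (hs₂ : s < 1 / 2)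
    (hp : 1 ≤ p) {x : EuclideanSpace ℝ (Fin p)} (hx : x ≠ 0) :
    ∫ t : EuclideanSpace ℝ (Fin p), cos ⟪t, x⟫ * (‖t‖ ^ (2 * ν) * rexp (-r * ‖t‖ ^ (2 * s))) =
      (2 / π) * ∫ q, mixing ν r s q * gaussFourier (p / 2) (‖x‖ ^ 2 / 4) q.2 ∂quadrant := by
  have hd : (0 : ℝ) < p / 2 := by
    have : (0 : ℝ) < p := by exact_mod_cast hp
    positivity
  have hX : 0 < ‖x‖ ^ 2 / 4 := by
    have := norm_pos_iff.2 hx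
    positivity
  obtain ⟨C, hC⟩ := gaussFourier_bounded hd hX
  have hpos : ∀ᶠ ε : ℝ in nhdsWithin 0 (Set.Ioi 0), 0 < ε := self_mem_nhdsWithin
  have hlim0 {f : ℝ → ℝ} (hf : ContinuousAt f 0) :
      Filter.Tendsto f (nhdsWithin 0 (Set.Ioi 0)) (nhds (f 0)) := hf.tendsto.mono_left nhdsWithin_le_nhds
  have hL : Filter.Tendsto (fun ε : ℝ => ∫ t : EuclideanSpace ℝ (Fin p),
      cos ⟪t, x⟫ * (‖t‖ ^ (2 * ν) * rexp (-r * ‖t‖ ^ (2 * s))) * rexp (-(ε * ‖t‖ ^ 2)))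
      (nhdsWithin 0 (Set.Ioi 0)) (nhds (∫ t : EuclideanSpace ℝ (Fin p),
        cos ⟪t, x⟫ * (‖t‖ ^ (2 * ν) * rexp (-r * ‖t‖ ^ (2 * s))))) := by
    refine tendsto_integral_filter_of_dominated_convergence _ (Filter.Eventually.of_forall fun ε => ?_) ?_
      (radial_integrable hν hr hs₁ hx) (Filter.Eventually.of_forall fun t => ?_)
    · exact Measurable.aestronglyMeasurable (by fun_prop)
    · filter_upwards [hpos] with ε hε
      refine Filter.Eventually.of_forall fun t => ?_
      have h1 := abs_cos_le_one ⟪t, x⟫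
      have h2 : rexp (-(ε * ‖t‖ ^ 2)) ≤ 1 := by
        rw [exp_le_one_iff]
        nlinarith [sq_nonneg ‖t‖]
      have h3 : 0 ≤ ‖t‖ ^ (2 * ν) * rexp (-r * ‖t‖ ^ (2 * s)) := by positivity
      rw [norm_mul, norm_mul, Real.norm_eq_abs, Real.norm_eq_abs, Real.norm_eq_abs, abs_exp,
        abs_of_nonneg h3]
      calc _ ≤ 1 * (‖t‖ ^ (2 * ν) * rexp (-r * ‖t‖ ^ (2 * s))) * 1 := by gcongr
        _ = _ := by ring
    · have := hlim0 (f := fun ε => cos ⟪t, x⟫ * (‖t‖ ^ (2 * ν) * rexp (-r * ‖t‖ ^ (2 * s))) *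
        rexp (-(ε * ‖t‖ ^ 2))) (by fun_prop)
      simpa using this
  have hR : Filter.Tendsto (fun ε : ℝ =>
      ∫ q, mixing ν r s q * gaussFourier (p / 2) (‖x‖ ^ 2 / 4) (q.2 + ε) ∂quadrant)
      (nhdsWithin 0 (Set.Ioi 0))
      (nhds (∫ q, mixing ν r s q * gaussFourier (p / 2) (‖x‖ ^ 2 / 4) q.2 ∂quadrant)) := by
    refine tendsto_integral_filter_of_dominated_convergence (fun q => |mixing ν r s q| * C)
      (Filter.Eventually.of_forall fun ε => ?_) ?_ ((mixing_integrable hν hr hs₁ hs₂).abs.mul_const C) ?_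
    · have := mixing_measurable ν r s
      have := gaussFourier_measurable (p / 2) (‖x‖ ^ 2 / 4)
      exact Measurable.aestronglyMeasurable (by fun_prop)
    · filter_upwards [hpos] with ε hε
      filter_upwards [ae_quadrant] with q hq
      rw [norm_mul, Real.norm_eq_abs, Real.norm_eq_abs]
      gcongr
      exact hC _ (add_pos hq.2 hε)
    · filter_upwards [ae_quadrant] with q hq
      have hq2 : q.2 + 0 ≠ 0 := by simpa using hq.2.ne'
      have := hlim0 (f := fun ε => mixing ν r s q *
        gaussFourier (p / 2) (‖x‖ ^ 2 / 4) (q.2 + ε)) (by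
          unfold gaussFourier
          have hdiv (c : ℝ) : ContinuousAt (fun ε : ℝ => c / (q.2 + ε)) 0 :=
            continuousAt_const.div (by fun_prop) hq2
          exact continuousAt_const.mul (((hdiv π).rpow_const (Or.inr hd.le)).mul (hdiv _).neg.rexp))
      simpa using this
  refine tendsto_nhds_unique hL ((hR.const_mul (2 / π)).congr' ?_)
  filter_upwards [hpos] with ε hε
  exact (integral_regularized hν hr hs₁ hs₂ hx hε).symm

/-! ### Termwise integration of the kernel series -/

/-- The coefficient of `v ^ (2 (s k + ν) + 1)` in the generalised power series of
`stieltjesKernel ν r s`. -/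
noncomputable def kernelCoeff (ν r s : ℝ) (k : ℕ) : ℝ :=
  (-1) ^ (k + 1) * r ^ k / k.factorial * sin (π * (s * k + ν))

/-- For `v > 0` the kernel is `v ^ (2ν+1)` times the imaginary part of
`exp (-iπν) * exp (-r v ^ (2s) exp (-iπs))`, so its series is read off from that of `exp`. -/
lemma stieltjesKernel_hasSum (ν r s : ℝ) {v : ℝ} (hv : 0 < v) :
    HasSum (fun k : ℕ => kernelCoeff ν r s k * v ^ (2 * (s * k + ν) + 1))
      (stieltjesKernel ν r s v) := by
  set z : ℂ := ((-(r * v ^ (2 * s)) : ℝ) : ℂ) * Complex.exp (((-(π * s) : ℝ) : ℂ) * Complex.I) with hz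
  have h1 : HasSum (fun k : ℕ => z ^ k / k.factorial) (Complex.exp z) := by
    rw [Complex.exp_eq_exp_ℂ]
    exact NormedSpace.expSeries_div_hasSum_exp z
  have h2 := Complex.hasSum_im
    ((h1.mul_left (Complex.exp (((-(π * ν) : ℝ) : ℂ) * Complex.I))).mul_left
      ((v ^ (2 * ν + 1) : ℝ) : ℂ))
  convert h2 using 1
  · ext k
    have hk : Complex.exp (((-(π * ν) : ℝ) : ℂ) * Complex.I) * (z ^ k / k.factorial)
        = (((-(r * v ^ (2 * s))) ^ k / k.factorial : ℝ) : ℂ) *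
          Complex.exp (((-(π * (s * k + ν)) : ℝ) : ℂ) * Complex.I) := by
      rw [hz, mul_pow, ← Complex.exp_nat_mul,
        show ((-(π * (s * k + ν)) : ℝ) : ℂ) * Complex.I = ((-(π * ν) : ℝ) : ℂ) * Complex.I +
          (k : ℂ) * (((-(π * s) : ℝ) : ℂ) * Complex.I) by push_cast; ring, Complex.exp_add]
      push_cast
      ring
    rw [hk, Complex.im_ofReal_mul, Complex.im_ofReal_mul, Complex.exp_ofReal_mul_I_im, sin_neg,
      kernelCoeff, show 2 * (s * k + ν) + 1 = (2 * ν + 1) + 2 * s * k by ring, rpow_add hv,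
      rpow_mul hv.le (2 * s), rpow_natCast, neg_pow (r * v ^ (2 * s)), mul_pow]
    ring
  · have hre : z = ((-(r * cos (π * s)) * v ^ (2 * s) : ℝ) : ℂ) +
        ((r * sin (π * s) * v ^ (2 * s) : ℝ) : ℂ) * Complex.I := by
      rw [hz, Complex.exp_mul_I, ← Complex.ofReal_cos, ← Complex.ofReal_sin, cos_neg, sin_neg]
      push_cast
      ring
    have he : Complex.exp (((-(π * ν) : ℝ) : ℂ) * Complex.I) * Complex.exp z =
        ((rexp (-(r * cos (π * s)) * v ^ (2 * s)) : ℝ) : ℂ) *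
          Complex.exp (((r * sin (π * s) * v ^ (2 * s) - π * ν : ℝ) : ℂ) * Complex.I) := by
      rw [hre, Complex.ofReal_exp, ← Complex.exp_add, ← Complex.exp_add]
      congr 1
      push_cast
      ring
    rw [he, Complex.im_ofReal_mul, Complex.im_ofReal_mul, Complex.exp_ofReal_mul_I_im,
      stieltjesKernel]
    ring

lemma integral_inv_gamma {c X : ℝ} (hc : 0 < c) (hX : 0 < X) :
    ∫ u in Set.Ioi (0 : ℝ), u ^ (-(c + 1)) * rexp (-(X / u)) = X ^ (-c) * Gamma c := by
  have h1 := integral_comp_rpow_Ioi (fun y : ℝ => y ^ (c - 1) * rexp (-(X * y)))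
    (by norm_num : (-1 : ℝ) ≠ 0)
  rw [Real.integral_rpow_mul_exp_neg_mul_Ioi hc hX, one_div, inv_rpow hX.le, ← rpow_neg hX.le] at h1
  rw [← h1]
  refine setIntegral_congr_fun measurableSet_Ioi fun u hu => ?_
  have hu : 0 < u := hu
  simp only [smul_eq_mul, abs_neg, abs_one, one_mul]
  rw [rpow_neg_one, inv_rpow hu.le, ← rpow_neg hu.le, ← mul_assoc, ← rpow_add hu]
  congr 2
  ring

lemma integral_moment_s4 {b u : ℝ} (hb : 0 ≤ b) (hu : 0 < u) :
    ∫ v in Set.Ioi (0 : ℝ), v ^ (2 * b + 1) * rexp (-(u * v ^ 2)) =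
      Gamma (b + 1) / 2 * u ^ (-(b + 1)) := by
  have h := integral_rpow_mul_exp_neg_mul_rpow (p := 2) (q := 2 * b + 1) two_pos (by linarith) hu
  simp only [rpow_two, neg_mul] at h
  rw [h, show -(2 * b + 1 + 1) / 2 = -(b + 1) by ring, show (2 * b + 1 + 1) / 2 = b + 1 by ring]
  ring

/-- The Gaussian transform of the monomial `v ^ (2b+1)`: the double integral is evaluated in the
order `v`, then `u`, each variable contributing one Gamma function. -/
lemma mixed_moment {b d X : ℝ} (hb : 0 ≤ b) (hd : 0 < d) (hX : 0 < X) :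
    Integrable (fun q : ℝ × ℝ =>
      q.1 ^ (2 * b + 1) * rexp (-(q.2 * q.1 ^ 2)) * gaussFourier d X q.2) quadrant ∧
    ∫ q : ℝ × ℝ, q.1 ^ (2 * b + 1) * rexp (-(q.2 * q.1 ^ 2)) * gaussFourier d X q.2 ∂quadrant =
      π ^ d / 2 * (Gamma (b + 1) * Gamma (b + d)) * X ^ (-(b + d)) := by
  have hΓ1 : 0 < Gamma (b + 1) := Gamma_pos_of_pos (by linarith)
  have hΓ2 : 0 < Gamma (b + d) := Gamma_pos_of_pos (by linarith)
  have hinner : ∀ u : ℝ, 0 < u →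
      ∫ v in Set.Ioi (0 : ℝ), v ^ (2 * b + 1) * rexp (-(u * v ^ 2)) * gaussFourier d X u =
        (π ^ d / 2 * Gamma (b + 1)) * (u ^ (-(b + d + 1)) * rexp (-(X / u))) := fun u hu => by
    rw [integral_mul_const, integral_moment_s4 hb hu, gaussFourier, div_rpow pi_pos.le hu.le,
      show -(b + d + 1) = -(b + 1) - d by ring, rpow_sub hu]
    ring
  have houter : ∫ u in Set.Ioi (0 : ℝ), (π ^ d / 2 * Gamma (b + 1)) *
      (u ^ (-(b + d + 1)) * rexp (-(X / u))) =
        π ^ d / 2 * (Gamma (b + 1) * Gamma (b + d)) * X ^ (-(b + d)) := by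
    rw [integral_const_mul, integral_inv_gamma (by linarith) hX]
    ring
  -- a function with nonzero Bochner integral is integrable
  have houter_int : IntegrableOn (fun u : ℝ => (π ^ d / 2 * Gamma (b + 1)) *
      (u ^ (-(b + d + 1)) * rexp (-(X / u)))) (Set.Ioi 0) := by
    by_contra h
    rw [integral_undef h] at houter
    have : 0 < π ^ d / 2 * (Gamma (b + 1) * Gamma (b + d)) * X ^ (-(b + d)) := by positivity
    linarith
  have hmeas : Measurable (fun q : ℝ × ℝ =>
      q.1 ^ (2 * b + 1) * rexp (-(q.2 * q.1 ^ 2)) * gaussFourier d X q.2) := by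
    have := gaussFourier_measurable d X
    fun_prop
  have hint : Integrable (fun q : ℝ × ℝ =>
      q.1 ^ (2 * b + 1) * rexp (-(q.2 * q.1 ^ 2)) * gaussFourier d X q.2) quadrant := by
    rw [quadrant, integrable_prod_iff' hmeas.aestronglyMeasurable]
    constructor
    · filter_upwards [ae_restrict_mem measurableSet_Ioi] with u hu
      have hu : 0 < u := hu
      have h := integrableOn_rpow_mul_exp_neg_mul_rpow (by linarith : -1 < 2 * b + 1) two_pos hu
      simp only [rpow_two, neg_mul] at h
      exact h.mul_const _
    · refine houter_int.congr ?_
      filter_upwards [ae_restrict_mem measurableSet_Ioi] with u hu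
      have hu : 0 < u := hu
      rw [← hinner u hu]
      refine setIntegral_congr_fun measurableSet_Ioi fun v hv => ?_
      have hv : 0 < v := hv
      have hg : 0 ≤ gaussFourier d X u := by unfold gaussFourier; positivity
      rw [norm_eq_abs, abs_of_nonneg (by positivity)]
  refine ⟨hint, ?_⟩
  rw [quadrant, integral_prod_symm _ hint, ← houter]
  exact setIntegral_congr_fun measurableSet_Ioi fun u hu => hinner u hu

/-- Log-convexity of `Gamma` between `z` and `z + 1`. -/
lemma Gamma_add_le {z s : ℝ} (hz : 0 < z) (hs₁ : 0 < s) (hs₂ : s < 1) :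
    Gamma (z + s) ≤ z ^ s * Gamma z := by
  have h := Real.Gamma_mul_add_mul_le_rpow_Gamma_mul_rpow_Gamma hz (by linarith : 0 < z + 1)
    (by linarith : 0 < 1 - s) hs₁ (by ring)
  have hΓ : 0 < Gamma z := Gamma_pos_of_pos hz
  rw [show (1 - s) * z + s * (z + 1) = z + s by ring, Gamma_add_one hz.ne',
    mul_rpow hz.le hΓ.le, mul_left_comm, ← rpow_add hΓ, sub_add_cancel, rpow_one] at h
  exact h

/-- Each Gamma factor grows by at most `O(k ^ s)` from one index to the next while the factorial
grows by `k + 1`, so the ratio of consecutive terms is `O(k ^ (2s - 1))`. It tends to `0` because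
`s < 1/2`. -/
lemma summable_gamma {α β s Y : ℝ} (hα : 0 < α) (hβ : 0 < β) (hs₁ : 0 < s) (hs₂ : s < 1 / 2)
    (hY : 0 < Y) :
    Summable (fun k : ℕ => Y ^ k / k.factorial * (Gamma (s * k + α) * Gamma (s * k + β))) := by
  set D := 1 + α + β with hD
  have hD1 : 1 ≤ D := by linarith
  have hlim : Filter.Tendsto (fun k : ℕ => Y * D * ((k : ℝ) + 1) ^ (2 * s - 1)) Filter.atTop
      (nhds 0) := by
    have h1 : Filter.Tendsto (fun y : ℝ => y ^ (-(1 - 2 * s))) Filter.atTop (nhds 0) :=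
      tendsto_rpow_neg_atTop (by linarith)
    have h2 := h1.comp (Filter.tendsto_atTop_add_const_right _ 1 tendsto_natCast_atTop_atTop)
    have h3 := h2.const_mul (Y * D)
    simp only [neg_sub, mul_zero] at h3
    exact h3
  refine summable_of_ratio_norm_eventually_le (r := 1 / 2) (by norm_num) ?_
  filter_upwards [hlim.eventually (gt_mem_nhds (by norm_num : (0 : ℝ) < 1 / 2))] with k hk
  have hk0 : (0 : ℝ) ≤ k := k.cast_nonneg
  have hstep (γ : ℝ) (hγ : 0 < γ) (hγD : γ + 1 ≤ D) :
      Gamma (s * (k + 1 : ℕ) + γ) ≤ (D * (k + 1)) ^ s * Gamma (s * k + γ) := by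
    have hz : 0 < s * k + γ := by positivity
    have hΓ := Gamma_pos_of_pos hz
    rw [show s * ((k + 1 : ℕ) : ℝ) + γ = (s * k + γ) + s by push_cast; ring]
    refine (Gamma_add_le hz hs₁ (by linarith)).trans ?_
    gcongr
    nlinarith
  have hA := hstep α hα (by linarith)
  have hB := hstep β hβ (by linarith)
  have p1 : 0 < Gamma (s * k + α) := Gamma_pos_of_pos (by positivity)
  have p2 : 0 < Gamma (s * k + β) := Gamma_pos_of_pos (by positivity)
  have p3 : 0 < Gamma (s * (k + 1 : ℕ) + α) := Gamma_pos_of_pos (by positivity)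
  have p4 : 0 < Gamma (s * (k + 1 : ℕ) + β) := Gamma_pos_of_pos (by positivity)
  have hk1 : (0 : ℝ) < k + 1 := by linarith
  have hDpow : (D * (k + 1)) ^ s * (D * (k + 1)) ^ s ≤ D * ((k : ℝ) + 1) ^ (2 * s) := by
    rw [← rpow_add (by positivity), ← two_mul, mul_rpow (by linarith) hk1.le]
    gcongr
    calc D ^ (2 * s) ≤ D ^ (1 : ℝ) := rpow_le_rpow_of_exponent_le hD1 (by linarith)
      _ = D := rpow_one D
  rw [norm_eq_abs, norm_eq_abs, abs_of_pos (by positivity), abs_of_pos (by positivity)]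
  calc Y ^ (k + 1) / ((k + 1).factorial : ℝ) *
        (Gamma (s * (k + 1 : ℕ) + α) * Gamma (s * (k + 1 : ℕ) + β))
      ≤ Y ^ (k + 1) / ((k + 1).factorial : ℝ) *
        (((D * (k + 1)) ^ s * Gamma (s * k + α)) * ((D * (k + 1)) ^ s * Gamma (s * k + β))) := by
        gcongr
    _ = Y ^ (k + 1) / ((k + 1).factorial : ℝ) * (((D * (k + 1)) ^ s * (D * (k + 1)) ^ s) *
        (Gamma (s * k + α) * Gamma (s * k + β))) := by ring
    _ ≤ Y ^ (k + 1) / ((k + 1).factorial : ℝ) * ((D * ((k : ℝ) + 1) ^ (2 * s)) *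
        (Gamma (s * k + α) * Gamma (s * k + β))) := by gcongr
    _ = (Y * D * ((k : ℝ) + 1) ^ (2 * s - 1)) *
        (Y ^ k / k.factorial * (Gamma (s * k + α) * Gamma (s * k + β))) := by
        rw [rpow_sub_one hk1.ne', Nat.factorial_succ, pow_succ]
        push_cast
        field_simp
    _ ≤ _ := by gcongr

/-- The `k`-th term of the series in the theorem, with `d` in place of `p / 2` and `N` in place of
`‖x‖`. -/
noncomputable def seriesTerm (ν r s d N : ℝ) (k : ℕ) : ℝ :=
  ((-1 : ℝ) ^ (k + 1) / (k.factorial : ℝ)) * (2 : ℝ) ^ (2 * s * k + 2 * ν + 2 * d) *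
    Gamma (s * k + ν + d) * Gamma (s * k + ν + 1) * sin (π * (s * k + ν)) *
    (N ^ 2 / r ^ (1 / s)) ^ (-(s * k) - ν - d)

/-- The `k`-th term of the kernel series, integrated against the Gaussian transform, is the `k`-th
term of the series sought, up to the common prefactor. -/
lemma seriesTerm_eq {ν r s d N : ℝ} (hr : 0 < r) (hs : 0 < s) (hN : 0 < N) (k : ℕ) :
    (2 / π) * (kernelCoeff ν r s k * (π ^ d / 2 * (Gamma (s * k + ν + 1) * Gamma (s * k + ν + d)) *
      (N ^ 2 / 4) ^ (-(s * k + ν + d)))) =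
    π ^ (d - 1) / r ^ ((2 * ν + 2 * d) / (2 * s)) * seriesTerm ν r s d N k := by
  have h4 : (N ^ 2 / 4) ^ (-(s * k + ν + d)) =
      (N ^ 2) ^ (-(s * k + ν + d)) * 2 ^ (2 * s * k + 2 * ν + 2 * d) := by
    rw [div_rpow (by positivity) (by norm_num), rpow_neg (by norm_num : (0 : ℝ) ≤ 4), div_inv_eq_mul,
      show (4 : ℝ) = 2 ^ (2 : ℝ) by norm_num, ← rpow_mul (by norm_num)]
    congr 2
    ring
  have hR : (N ^ 2 / r ^ (1 / s)) ^ (-(s * k) - ν - d) =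
      (N ^ 2) ^ (-(s * k + ν + d)) * (r ^ k * r ^ ((2 * ν + 2 * d) / (2 * s))) := by
    rw [show -(s * k) - ν - d = -(s * k + ν + d) by ring, div_rpow (by positivity) (by positivity),
      rpow_neg (by positivity : 0 ≤ r ^ (1 / s)), div_inv_eq_mul, ← rpow_mul hr.le,
      ← rpow_natCast r k, ← rpow_add hr]
    congr 2
    field_simp
    ring
  have hrpos : 0 < r ^ ((2 * ν + 2 * d) / (2 * s)) := by positivity
  rw [seriesTerm, h4, hR, kernelCoeff, rpow_sub_one pi_pos.ne']
  have := pi_pos.ne'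
  field_simp

lemma seriesTerm_summable {ν r s d N : ℝ} (hν : 0 ≤ ν) (hd : 0 < d) (hr : 0 < r) (hs₁ : 0 < s)
    (hs₂ : s < 1 / 2) (hN : 0 < N) : Summable (fun k => |seriesTerm ν r s d N k|) := by
  set A := N ^ 2 / r ^ (1 / s) with hA
  have hApos : 0 < A := by positivity
  have hsum := (summable_gamma (α := ν + d) (β := ν + 1) (Y := 2 ^ (2 * s) * A ^ (-s))
    (by linarith) (by linarith) hs₁ hs₂ (by positivity)).mul_left
      (2 ^ (2 * ν + 2 * d) * A ^ (-(ν + d)))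
  refine hsum.of_nonneg_of_le (fun k => abs_nonneg _) fun k => ?_
  have hk0 : (0 : ℝ) ≤ k := k.cast_nonneg
  have p1 : 0 < Gamma (s * k + ν + d) := Gamma_pos_of_pos (by positivity)
  have p2 : 0 < Gamma (s * k + ν + 1) := Gamma_pos_of_pos (by positivity)
  have e1 : (2 : ℝ) ^ (2 * s * k + 2 * ν + 2 * d) = (2 ^ (2 * s)) ^ k * 2 ^ (2 * ν + 2 * d) := by
    rw [← rpow_natCast, ← rpow_mul (by norm_num), ← rpow_add (by norm_num)]
    congr 1
    ring
  have e2 : A ^ (-(s * k) - ν - d) = (A ^ (-s)) ^ k * A ^ (-(ν + d)) := by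
    rw [← rpow_natCast, ← rpow_mul hApos.le, ← rpow_add hApos]
    congr 1
    ring
  have hs := abs_sin_le_one (π * (s * k + ν))
  rw [seriesTerm, ← hA, e1, e2]
  simp only [abs_mul, abs_div, abs_pow, abs_neg, abs_one, one_pow, Nat.abs_cast]
  simp only [abs_of_pos p1, abs_of_pos p2, abs_of_pos (rpow_pos_of_pos hApos _),
    abs_of_pos (rpow_pos_of_pos (two_pos : (0 : ℝ) < 2) _)]
  calc _ ≤ 1 / (k.factorial : ℝ) * ((2 ^ (2 * s)) ^ k * 2 ^ (2 * ν + 2 * d)) *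
        Gamma (s * k + ν + d) * Gamma (s * k + ν + 1) * 1 *
        ((A ^ (-s)) ^ k * A ^ (-(ν + d))) := by gcongr
    _ = _ := by
      rw [mul_pow, add_assoc, add_assoc]
      ring

lemma integral_mixing_eq_tsum {ν r s d N : ℝ} (hν : 0 ≤ ν) (hd : 0 < d) (hr : 0 < r) (hs₁ : 0 < s)
    (hs₂ : s < 1 / 2) (hN : 0 < N) :
    (2 / π) * ∫ q, mixing ν r s q * gaussFourier d (N ^ 2 / 4) q.2 ∂quadrant =
      π ^ (d - 1) / r ^ ((2 * ν + 2 * d) / (2 * s)) * ∑' k, seriesTerm ν r s d N k := by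
  have hX : 0 < N ^ 2 / 4 := by positivity
  have hb (k : ℕ) : 0 ≤ s * k + ν := by positivity
  set J : ℕ → ℝ := fun k => π ^ d / 2 * (Gamma (s * k + ν + 1) * Gamma (s * k + ν + d)) *
    (N ^ 2 / 4) ^ (-(s * k + ν + d)) with hJ
  set M : ℕ → ℝ × ℝ → ℝ := fun k q =>
    q.1 ^ (2 * (s * k + ν) + 1) * rexp (-(q.2 * q.1 ^ 2)) * gaussFourier d (N ^ 2 / 4) q.2 with hM
  have hMint (k : ℕ) : Integrable (M k) quadrant := (mixed_moment (hb k) hd hX).1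
  have hMval (k : ℕ) : ∫ q, M k q ∂quadrant = J k := (mixed_moment (hb k) hd hX).2
  have hJnn (k : ℕ) : 0 ≤ J k := by
    have p1 : 0 < Gamma (s * k + ν + d) := Gamma_pos_of_pos (by linarith [hb k])
    have p2 : 0 < Gamma (s * k + ν + 1) := Gamma_pos_of_pos (by linarith [hb k])
    positivity
  have hnorm (k : ℕ) : ∫ q, ‖kernelCoeff ν r s k * M k q‖ ∂quadrant = |kernelCoeff ν r s k| * J k := by
    rw [← hMval, ← integral_const_mul]
    refine integral_congr_ae ?_
    filter_upwards [ae_quadrant] with q hq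
    have h1 := hq.1
    have h2 := hq.2
    have : 0 ≤ M k q := by
      simp only [hM, gaussFourier]
      positivity
    rw [norm_mul, norm_eq_abs, norm_eq_abs, abs_of_nonneg this]
  have hterm (k : ℕ) : kernelCoeff ν r s k * J k =
      (π / 2) * (π ^ (d - 1) / r ^ ((2 * ν + 2 * d) / (2 * s))) * seriesTerm ν r s d N k := by
    rw [mul_assoc, ← seriesTerm_eq hr hs₁ hN k]
    simp only [hJ]
    have := pi_pos.ne'
    field_simp
  have hsum : Summable fun k => ∫ q, ‖kernelCoeff ν r s k * M k q‖ ∂quadrant := by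
    have := (seriesTerm_summable hν hd hr hs₁ hs₂ hN).mul_left
      |(π / 2) * (π ^ (d - 1) / r ^ ((2 * ν + 2 * d) / (2 * s)))|
    refine this.congr fun k => ?_
    rw [hnorm, ← abs_mul, ← hterm, abs_mul, abs_of_nonneg (hJnn k)]
  have hmain := (hasSum_integral_of_summable_integral_norm
    (fun k => (hMint k).const_mul (kernelCoeff ν r s k)) hsum).tsum_eq
  have hpt : ∫ q, ∑' k, kernelCoeff ν r s k * M k q ∂quadrant =
      ∫ q, mixing ν r s q * gaussFourier d (N ^ 2 / 4) q.2 ∂quadrant := by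
    refine integral_congr_ae ?_
    filter_upwards [ae_quadrant] with q hq
    have h := (stieltjesKernel_hasSum ν r s hq.1).mul_right
      (rexp (-(q.2 * q.1 ^ 2)) * gaussFourier d (N ^ 2 / 4) q.2)
    rw [mixing, mul_assoc, ← h.tsum_eq]
    congr 1 with k
    simp only [hM]
    ring
  rw [← hpt, ← hmain, ← tsum_mul_left, ← tsum_mul_left]
  congr 1 with k
  rw [integral_const_mul, hMval, seriesTerm_eq hr hs₁ hN k]

/-- Series expansion of `I_{ν,r}(x;s) = ∫ cos(tᵀx)(‖t‖²)^ν exp(-r(‖t‖²)^s) dt` for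
`0 < s < 1/2` and `x ≠ 0`, the series being absolutely convergent. -/
theorem kotz_integral_series_s_lt_half
    (p : ℕ) (hp : 1 ≤ p) (ν r s : ℝ) (hν : 0 ≤ ν) (hr : 0 < r)
    (hs₁ : 0 < s) (hs₂ : s < 1 / 2)
    (x : EuclideanSpace ℝ (Fin p)) (hx : x ≠ 0) :
    Summable (fun k : ℕ =>
      |((-1 : ℝ) ^ (k + 1) / (k.factorial : ℝ)) * (2 : ℝ) ^ (2 * s * k + 2 * ν + p) *
        Real.Gamma (s * k + ν + p / 2) * Real.Gamma (s * k + ν + 1) *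
        Real.sin (π * (s * k + ν)) *
        (‖x‖ ^ 2 / r ^ (1 / s)) ^ (-(s * k) - ν - p / 2)|) ∧
    ∫ t : EuclideanSpace ℝ (Fin p),
        Real.cos ⟪t, x⟫ * (‖t‖ ^ 2) ^ ν * Real.exp (-r * (‖t‖ ^ 2) ^ s) =
      π ^ ((p : ℝ) / 2 - 1) / r ^ ((2 * ν + p) / (2 * s)) *
        ∑' k : ℕ, ((-1 : ℝ) ^ (k + 1) / (k.factorial : ℝ)) *
          (2 : ℝ) ^ (2 * s * k + 2 * ν + p) *
          Real.Gamma (s * k + ν + p / 2) * Real.Gamma (s * k + ν + 1) *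
          Real.sin (π * (s * k + ν)) *
          (‖x‖ ^ 2 / r ^ (1 / s)) ^ (-(s * k) - ν - p / 2) := by
  have hd : (0 : ℝ) < p / 2 := by
    have : (0 : ℝ) < p := by exact_mod_cast hp
    positivity
  have hN : 0 < ‖x‖ := norm_pos_iff.2 hx
  have hterm (k : ℕ) : ((-1 : ℝ) ^ (k + 1) / (k.factorial : ℝ)) *
      (2 : ℝ) ^ (2 * s * k + 2 * ν + p) * Real.Gamma (s * k + ν + p / 2) *
      Real.Gamma (s * k + ν + 1) * Real.sin (π * (s * k + ν)) *
      (‖x‖ ^ 2 / r ^ (1 / s)) ^ (-(s * k) - ν - p / 2) = seriesTerm ν r s (p / 2) ‖x‖ k := by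
    rw [seriesTerm, mul_div_cancel₀ (p : ℝ) two_ne_zero]
  simp only [hterm]
  refine ⟨seriesTerm_summable hν hd hr hs₁ hs₂ hN, ?_⟩
  have h := integral_mixing_eq_tsum hν hd hr hs₁ hs₂ hN
  rw [← integral_eq_mixing hν hr hs₁ hs₂ hp hx, mul_div_cancel₀ (p : ℝ) two_ne_zero] at h
  rw [← h]
  congr 1 with t
  rw [← rpow_two, ← rpow_mul (norm_nonneg t), ← rpow_mul (norm_nonneg t), mul_assoc]
end

section
/- Let $p = 2$, let $\nu \ge 0$ be an integer, and let $r > 0$. Then for every $x \in \mathbb{R}^2$, $I_{\nu,r}\!\big(x;\tfrac12\big) = \dfrac{2\pi\, \Gamma(2(\nu+1))\, (\nu+1)!}{4^{\nu}\, r^{2(\nu+1)}\, (\|x\|^2+r^2)^{2\nu+3/2}} \sum_{k=0}^{\nu} \dfrac{(2(\nu-k))!\,(2k)!}{(\nu-k)!\,(k!)^2}\, (\|x\|^2+r^2)^{k} \sum_{\ell=0}^{\nu-k} \dfrac{(-1)^{\ell}\, 4^{\ell}\, r^{4\nu+3-2k-2\ell}\, \|x\|^{2\ell}}{(\nu+1-\ell)!\,(\nu-k-\ell)!\,(2\ell)!}$.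 -/
/-!
Write `a = ‖x‖` and `R² = a² + r²`. In polar coordinates the radial integral is a Gamma integral
with complex parameter `w = r + i a cos θ`, so the left-hand side is
`(2ν+1)! · Re ∫ w ^ (-(2ν+1) - 1) dθ` (`integral_eq_laplaceK`).

The integrals `K m = ∫ (r + i a cos θ) ^ m dθ`, `m ∈ ℤ`, are Laplace's integrals for Legendre
polynomials. One integration by parts gives a three-term recurrence valid for all integers `m`
(`laplaceK_rec`), and this recurrence is compatible with the reflection `m ↦ -m - 1`. Checking the
initial value `Re K (-1) = 2π / R` then yields `Re K (-n-1) = Re K n / R ^ (2n+1)`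
(`re_laplaceK_reflect`). For `n = 2ν + 1` the right-hand side is a polynomial, expanded by the
binomial theorem and Wallis' formula (`laplaceK_odd`).

It remains to identify this polynomial with the double sum. With `A = r²` and `X = a²`, both are,
up to the factor `4 ^ ν`, the coefficient of `u ^ ν` in the formal power series
`(1 - 4Au) ^ (-ν - 3/2) * (1 - 4(X + A)u) ^ (ν + 1/2)`: `closed_form_coeff` obtains the double sum
from the finite expansion of `((1 - 4Au) - 4Xu) ^ (ν + 1)`, and `coeff_eq_laplace` obtains the other
one by expanding in powers of `X` and applying the Chu-Vandermonde identity.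
-/

open MeasureTheory Real
open scoped RealInnerProductSpace

/-! ### Generalized binomial coefficients -/

theorem succ_mul_choose (α : ℝ) (n : ℕ) :
    ((n : ℝ) + 1) * Ring.choose α (n + 1) = (α - n) * Ring.choose α n := by
  have h := Ring.choose_smul_choose α (Nat.le_succ n)
  simp only [Nat.succ_eq_add_one, Nat.choose_succ_self_right, Nat.add_sub_cancel_left,
    Ring.choose_one_right, nsmul_eq_mul, Nat.cast_add, Nat.cast_one] at h
  linarith

theorem choose_neg_half (l j : ℕ) :
    (-4 : ℝ) ^ j * Ring.choose (-(1 / 2) - (l : ℝ)) j =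
      ((2 * (l + j)).factorial * l.factorial : ℝ) /
        ((l + j).factorial * j.factorial * (2 * l).factorial) := by
  induction j with
  | zero => simp; field_simp
  | succ j ih =>
    have h := succ_mul_choose (-(1 / 2) - (l : ℝ)) j
    have h1 : (2 * (l + (j + 1))).factorial =
        (2 * (l + j) + 2) * ((2 * (l + j) + 1) * (2 * (l + j)).factorial) := by
      rw [show 2 * (l + (j + 1)) = 2 * (l + j) + 1 + 1 by ring, Nat.factorial_succ,
        Nat.factorial_succ]
    rw [h1, ← add_assoc, Nat.factorial_succ (l + j), Nat.factorial_succ j]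
    have hj : (j : ℝ) + 1 ≠ 0 := by positivity
    have : Ring.choose (-(1 / 2) - (l : ℝ)) (j + 1) =
        (-(1 / 2) - (l : ℝ) - j) * Ring.choose (-(1 / 2) - (l : ℝ)) j / (j + 1) := by
      rw [← h]; field_simp
    rw [this, show (-4 : ℝ) ^ (j + 1) * ((-(1 / 2) - (l : ℝ) - j) *
        Ring.choose (-(1 / 2) - (l : ℝ)) j / (j + 1)) = (-4 * (-(1 / 2) - (l : ℝ) - j) / (j + 1)) *
        ((-4 : ℝ) ^ j * Ring.choose (-(1 / 2) - (l : ℝ)) j) by ring, ih]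
    push_cast
    field_simp
    ring

theorem choose_neg_nat (l j : ℕ) :
    (-1 : ℝ) ^ j * Ring.choose (-1 - (l : ℝ)) j =
      ((l + j).factorial : ℝ) / (l.factorial * j.factorial) := by
  induction j with
  | zero => simp; field_simp
  | succ j ih =>
    have h := succ_mul_choose (-1 - (l : ℝ)) j
    rw [← add_assoc, Nat.factorial_succ (l + j), Nat.factorial_succ j]
    have hj : (j : ℝ) + 1 ≠ 0 := by positivity
    have : Ring.choose (-1 - (l : ℝ)) (j + 1) =
        (-1 - (l : ℝ) - j) * Ring.choose (-1 - (l : ℝ)) j / (j + 1) := by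
      rw [← h]; field_simp
    rw [this, show (-1 : ℝ) ^ (j + 1) * ((-1 - (l : ℝ) - j) *
        Ring.choose (-1 - (l : ℝ)) j / (j + 1)) = (-1 * (-1 - (l : ℝ) - j) / (j + 1)) *
        ((-1 : ℝ) ^ j * Ring.choose (-1 - (l : ℝ)) j) by ring, ih]
    push_cast
    field_simp
    ring

theorem choose_add_half (l : ℕ) : ∀ m : ℕ,
    Ring.choose ((l + m : ℝ) + 1 / 2) l =
      ((2 * (l + m) + 1).factorial * m.factorial : ℝ) /
        (4 ^ l * (l + m).factorial * l.factorial * (2 * m + 1).factorial) := by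
  induction l with
  | zero => intro m; simp; field_simp
  | succ l ih =>
    intro m
    have h := succ_mul_choose ((l + (m + 1 : ℕ) : ℝ) + 1 / 2) l
    rw [ih] at h
    have hl : (l : ℝ) + 1 ≠ 0 := by positivity
    rw [show ((l + 1 : ℕ) + m : ℝ) + 1 / 2 = (l + (m + 1 : ℕ) : ℝ) + 1 / 2 by push_cast; ring]
    apply mul_left_cancel₀ hl
    rw [h, show l + 1 + m = l + (m + 1) by ring, Nat.factorial_succ l, Nat.factorial_succ m,
      show 2 * (m + 1) + 1 = 2 * m + 1 + 1 + 1 by ring, Nat.factorial_succ (2 * m + 1 + 1),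
      Nat.factorial_succ (2 * m + 1)]
    push_cast
    field_simp
    ring

/-! ### The double sum as a power series coefficient -/

/-- `(1 + c u) ^ α` as a formal power series in `u`. -/
noncomputable def binSeries (c α : ℝ) : PowerSeries ℝ :=
  PowerSeries.rescale c (PowerSeries.binomialSeries ℝ α)

theorem coeff_binSeries (c α : ℝ) (n : ℕ) :
    PowerSeries.coeff n (binSeries c α) = c ^ n * Ring.choose α n := by
  simp [binSeries]

theorem binSeries_add (c α β : ℝ) :
    binSeries c (α + β) = binSeries c α * binSeries c β := by
  simp [binSeries, PowerSeries.binomialSeries_add]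

theorem binSeries_nat (c : ℝ) (n : ℕ) :
    binSeries c n = (1 + PowerSeries.C c * PowerSeries.X) ^ n := by
  simp [binSeries, PowerSeries.binomialSeries_nat, PowerSeries.rescale_X]

/-- The double sum of the closed form, after the powers of `r` common to all terms are removed
(`A = r²`, `X = ‖x‖²`), is a coefficient of a product of two binomial series. The sum over `k`
is the Cauchy product with `(1 - 4(X + A)u) ^ (-1/2)`. The sum over `l` is the binomial expansion of
`((1 - 4Au) - 4Xu) ^ (ν + 1)`, whose last term `l = ν + 1` does not reach degree `ν`. -/
theorem closed_form_coeff (ν : ℕ) (A X : ℝ) :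
    ((ν + 1).factorial : ℝ) * ∑ k ∈ Finset.range (ν + 1),
          (((2 * (ν - k)).factorial : ℝ) * ((2 * k).factorial : ℝ) /
              (((ν - k).factorial : ℝ) * ((k.factorial : ℝ)) ^ 2)) *
            (X + A) ^ k *
            ∑ l ∈ Finset.range (ν - k + 1),
              ((-1 : ℝ) ^ l * (4 : ℝ) ^ l * A ^ (ν - k - l) * X ^ l) /
                (((ν + 1 - l).factorial : ℝ) * ((ν - k - l).factorial : ℝ) *
                  ((2 * l).factorial : ℝ)) =
    PowerSeries.coeff ν (binSeries (-4 * A) (-(ν : ℝ) - 3 / 2) *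
      binSeries (-4 * (X + A)) (ν + 1 / 2)) := by
  set P := binSeries (-4 * A) (-(ν : ℝ) - 3 / 2) with hP
  set Q := binSeries (-4 * (X + A)) (-(1 / 2) - (0 : ℕ)) with hQ
  have hQc : ∀ k, PowerSeries.coeff k Q =
      (2 * k).factorial / (k.factorial : ℝ) ^ 2 * (X + A) ^ k := by
    intro k
    have := choose_neg_half 0 k
    rw [hQ, coeff_binSeries, mul_pow, mul_right_comm, this]
    simp only [zero_add, mul_zero, Nat.factorial_zero, Nat.cast_one, mul_one, pow_two]
  -- the binomial theorem for `((1 - 4Au) - 4Xu) ^ (ν + 1)`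
  have h1 : P * binSeries (-4 * (X + A)) (ν + 1 / 2) =
      ∑ l ∈ Finset.range (ν + 2), PowerSeries.C ((-4 * X) ^ l * ((ν + 1).choose l : ℝ)) *
        (PowerSeries.X ^ l * (binSeries (-4 * A) (-(1 / 2) - l) * Q)) := by
    have e1 : binSeries (-4 * (X + A)) (ν + 1 / 2) =
        (PowerSeries.C (-4 * X) * PowerSeries.X + (1 + PowerSeries.C (-4 * A) * PowerSeries.X))
          ^ (ν + 1) * Q := by
      rw [show (ν : ℝ) + 1 / 2 = ((ν + 1 : ℕ) : ℝ) + (-(1 / 2) - (0 : ℕ)) by push_cast; ring,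
        binSeries_add, binSeries_nat, hQ]
      congr 2
      rw [mul_add, map_add]; ring
    rw [e1, add_pow, Finset.sum_mul, Finset.mul_sum]
    refine Finset.sum_congr rfl fun l hl => ?_
    have hl' : l ≤ ν + 1 := by simpa [Nat.lt_succ_iff] using hl
    rw [← binSeries_nat, show (-(1 / 2) - (l : ℝ)) =
      (-(ν : ℝ) - 3 / 2) + ((ν + 1 - l : ℕ) : ℝ) by rw [Nat.cast_sub hl']; push_cast; ring,
      binSeries_add, ← hP, mul_pow, map_mul PowerSeries.C (_ ^ l), map_pow, map_natCast]
    ring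
  rw [h1, map_sum, Finset.sum_range_succ _ (ν + 1)]
  have h2 : ∀ l, PowerSeries.coeff ν (PowerSeries.C ((-4 * X) ^ l * ((ν + 1).choose l : ℝ)) *
        (PowerSeries.X ^ l * (binSeries (-4 * A) (-(1 / 2) - l) * Q))) =
      (-4 * X) ^ l * ((ν + 1).choose l : ℝ) * if l ≤ ν then ∑ k ∈ Finset.range (ν - l + 1),
        PowerSeries.coeff k Q *
          ((-4 * A) ^ (ν - l - k) * Ring.choose (-(1 / 2) - (l : ℝ)) (ν - l - k)) else 0 := by
    intro l
    rw [PowerSeries.coeff_C_mul, PowerSeries.coeff_X_pow_mul', mul_comm _ Q,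
      PowerSeries.coeff_mul, Finset.Nat.sum_antidiagonal_eq_sum_range_succ_mk]
    simp only [coeff_binSeries]
  rw [h2 (ν + 1), if_neg (by omega), mul_zero, add_zero]
  simp only [h2]
  have h3 : ∀ l ∈ Finset.range (ν + 1), ((-4 * X) ^ l * ((ν + 1).choose l : ℝ) *
      if l ≤ ν then ∑ k ∈ Finset.range (ν - l + 1),
        PowerSeries.coeff k Q *
          ((-4 * A) ^ (ν - l - k) * Ring.choose (-(1 / 2) - (l : ℝ)) (ν - l - k)) else 0) =
      ∑ k ∈ Finset.range (ν - l + 1), (-4 * X) ^ l * ((ν + 1).choose l : ℝ) *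
        (PowerSeries.coeff k Q *
          ((-4 * A) ^ (ν - l - k) * Ring.choose (-(1 / 2) - (l : ℝ)) (ν - l - k))) := by
    intro l hl
    rw [if_pos (by simpa [Nat.lt_succ_iff] using hl), Finset.mul_sum]
  rw [Finset.sum_congr rfl h3, Finset.sum_comm' (s' := fun k => Finset.range (ν - k + 1))
    (t' := Finset.range (ν + 1)) (by intro a b; simp only [Finset.mem_range]; omega),
    Finset.mul_sum]
  refine Finset.sum_congr rfl fun k hk => ?_
  rw [Finset.mul_sum, Finset.mul_sum]
  refine Finset.sum_congr rfl fun l hl => ?_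
  simp only [Finset.mem_range] at hk hl
  obtain ⟨j, rfl⟩ : ∃ j, ν = k + l + j := ⟨ν - k - l, by omega⟩
  have e1 : k + l + j - l - k = j := by omega
  have e2 : k + l + j - k - l = j := by omega
  have e3 : k + l + j - k = l + j := by omega
  have e4 := choose_neg_half l j
  rw [e1, e2, e3, hQc, mul_pow (-4) A, mul_right_comm ((-4) ^ j), e4,
    Nat.cast_choose ℝ (by omega : l ≤ k + l + j + 1)]
  rw [show (-4 * X) ^ l = (-1) ^ l * 4 ^ l * X ^ l by rw [← mul_pow, ← mul_pow]; norm_num]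
  field_simp

/-- The same coefficient as a sum over powers of `X`: after expanding `(X + A) ^ n`, the
coefficient of each power of `X` is summed by the Chu-Vandermonde identity. -/
theorem coeff_eq_laplace (ν : ℕ) (A X : ℝ) :
    PowerSeries.coeff ν (binSeries (-4 * A) (-(ν : ℝ) - 3 / 2) *
      binSeries (-4 * (X + A)) (ν + 1 / 2)) =
    4 ^ ν * ∑ l ∈ Finset.range (ν + 1), ((2 * ν + 1).choose (2 * l) * (2 * l).choose l : ℝ) *
      (-1 / 4) ^ l * A ^ (ν - l) * X ^ l := by
  set α : ℝ := ν + 1 / 2 with hα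
  have hβ : -(ν : ℝ) - 3 / 2 = -α - 1 := by rw [hα]; ring
  rw [hβ, mul_comm, PowerSeries.coeff_mul, Finset.Nat.sum_antidiagonal_eq_sum_range_succ_mk]
  simp only [coeff_binSeries]
  have h1 : ∀ n ∈ Finset.range (ν + 1), (-4 * (X + A)) ^ n * Ring.choose α n *
      ((-4 * A) ^ (ν - n) * Ring.choose (-α - 1) (ν - n)) =
      ∑ l ∈ Finset.range (n + 1), (-4) ^ ν * X ^ l * A ^ (ν - l) * (Ring.choose α l *
        (Ring.choose (α - l) (n - l) * Ring.choose (-α - 1) (ν - n))) := by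
    intro n hn
    rw [mul_pow, add_pow, Finset.mul_sum, Finset.sum_mul, Finset.sum_mul]
    refine Finset.sum_congr rfl fun l hl => ?_
    simp only [Finset.mem_range] at hn hl
    obtain ⟨i, rfl⟩ : ∃ i, n = l + i := ⟨n - l, by omega⟩
    obtain ⟨j, rfl⟩ : ∃ j, ν = l + i + j := ⟨ν - (l + i), by omega⟩
    have h := Ring.choose_smul_choose α (show l ≤ l + i by omega)
    have e1 : l + i + j - (l + i) = j := by omega
    have e2 : l + i + j - l = i + j := by omega
    rw [nsmul_eq_mul] at h
    rw [e1, e2]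
    rw [Nat.add_sub_cancel_left] at h ⊢
    rw [← mul_assoc (Ring.choose α l), ← h]
    ring
  rw [Finset.sum_congr rfl h1, Finset.sum_comm' (s' := fun l => Finset.Ico l (ν + 1))
    (t' := Finset.range (ν + 1)) (by intro a b; simp only [Finset.mem_range, Finset.mem_Ico]; omega),
    Finset.mul_sum]
  refine Finset.sum_congr rfl fun l hl => ?_
  simp only [Finset.mem_range] at hl
  rw [← Finset.mul_sum, ← Finset.mul_sum]
  obtain ⟨m, hm⟩ : ∃ m, ν = l + m := ⟨ν - l, by omega⟩
  have h2 : ∑ n ∈ Finset.Ico l (ν + 1), Ring.choose (α - l) (n - l) *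
      Ring.choose (-α - 1) (ν - n) = Ring.choose (-1 - (l : ℝ)) m := by
    rw [show (-1 - (l : ℝ)) = (α - l) + (-α - 1) by ring,
      Ring.add_choose_eq _ (Commute.all _ _), Finset.Nat.sum_antidiagonal_eq_sum_range_succ_mk,
      Finset.sum_Ico_eq_sum_range, show ν + 1 - l = m + 1 by omega]
    refine Finset.sum_congr rfl fun i hi => ?_
    rw [show l + i - l = i by omega, show ν - (l + i) = m - i by omega]
  have h3 := choose_add_half l m
  have h4 := choose_neg_nat l m
  rw [h2, hα]
  subst hm
  rw [Nat.cast_add l m, h3, Nat.cast_choose ℝ (by omega : 2 * l ≤ 2 * (l + m) + 1),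
    Nat.cast_choose ℝ (by omega : l ≤ 2 * l), show 2 * (l + m) + 1 - 2 * l = 2 * m + 1 by omega,
    show 2 * l - l = l by omega, show l + m - l = m by omega]
  have h5 : Ring.choose (-1 - (l : ℝ)) m =
      (-1) ^ m * (((l + m).factorial : ℝ) / (l.factorial * m.factorial)) := by
    rw [← h4, ← mul_assoc, ← mul_pow]; norm_num
  rw [h5, show (-4 : ℝ) ^ (l + m) = (-1) ^ l * (-1) ^ m * 4 ^ (l + m) by
    rw [← pow_add, ← mul_pow]; norm_num, div_pow]
  have h6 : ((-1 : ℝ) ^ m) * (-1) ^ m = 1 := by rw [← mul_pow]; norm_num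
  field_simp
  linear_combination X ^ l * A ^ m * h6

/-! ### The radial integral -/

theorem integrableOn_pow_mul_exp (n : ℕ) {r : ℝ} (hr : 0 < r) :
    IntegrableOn (fun ρ : ℝ => ρ ^ n * Real.exp (-r * ρ)) (Set.Ioi 0) := by
  have := integrableOn_rpow_mul_exp_neg_mul_rpow (p := 1) (s := n) (b := r)
    (by have : (0 : ℝ) ≤ n := n.cast_nonneg
        linarith) one_pos hr
  simpa using this

theorem norm_pow_mul_cexp (n : ℕ) (w : ℂ) {ρ : ℝ} (hρ : 0 ≤ ρ) :
    ‖(ρ : ℂ) ^ n * Complex.exp (-w * ρ)‖ = ρ ^ n * Real.exp (-w.re * ρ) := by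
  rw [norm_mul, norm_pow, Complex.norm_real, Complex.norm_exp, Real.norm_of_nonneg hρ]
  simp

theorem integrableOn_pow_mul_cexp (n : ℕ) {w : ℂ} (hw : 0 < w.re) :
    IntegrableOn (fun ρ : ℝ => (ρ : ℂ) ^ n * Complex.exp (-w * ρ)) (Set.Ioi 0) := by
  refine (integrableOn_pow_mul_exp n hw).mono' (by fun_prop) ?_
  filter_upwards [ae_restrict_mem measurableSet_Ioi] with ρ hρ
  exact (norm_pow_mul_cexp n w (le_of_lt hρ)).le

/-- The Gamma integral with a complex rate `w`, by integrating the derivative of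
`ρ ^ (n + 1) * exp (-w ρ)` over the half-line. -/
theorem integral_pow_mul_cexp (n : ℕ) {w : ℂ} (hw : 0 < w.re) :
    ∫ ρ in Set.Ioi (0 : ℝ), (ρ : ℂ) ^ n * Complex.exp (-w * ρ) =
      n.factorial * w ^ (-(n : ℤ) - 1) := by
  have hw0 : w ≠ 0 := by rintro rfl; simp at hw
  induction n with
  | zero =>
    have := integral_exp_mul_complex_Ioi (a := -w) (by simpa using hw) 0
    simpa [zpow_neg] using this
  | succ n ih =>
    have hd : ∀ ρ ∈ Set.Ici (0 : ℝ), HasDerivAt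
        (fun ρ : ℝ => (ρ : ℂ) ^ (n + 1) * Complex.exp (-w * ρ))
        ((n + 1) * ((ρ : ℂ) ^ n * Complex.exp (-w * ρ)) -
          w * ((ρ : ℂ) ^ (n + 1) * Complex.exp (-w * ρ))) ρ := by
      intro ρ _
      have h1 : HasDerivAt (fun z : ℂ => z ^ (n + 1) * Complex.exp (-w * z))
          (((n + 1 : ℕ) * (ρ : ℂ) ^ n) * Complex.exp (-w * ρ) +
            (ρ : ℂ) ^ (n + 1) * (Complex.exp (-w * ρ) * (-w * 1))) ρ :=
        (hasDerivAt_pow (n + 1) (ρ : ℂ)).mul (((hasDerivAt_id (ρ : ℂ)).const_mul (-w)).cexp)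
      convert! h1.comp_ofReal using 1
      push_cast; ring
    have hi1 := (integrableOn_pow_mul_cexp n hw).const_mul ((n : ℂ) + 1)
    have hi2 := (integrableOn_pow_mul_cexp (n + 1) hw).const_mul w
    have ht : Filter.Tendsto (fun ρ : ℝ => (ρ : ℂ) ^ (n + 1) * Complex.exp (-w * ρ))
        Filter.atTop (nhds 0) := by
      rw [tendsto_zero_iff_norm_tendsto_zero]
      have := tendsto_rpow_mul_exp_neg_mul_atTop_nhds_zero (n + 1 : ℕ) w.re hw
      refine this.congr' ?_
      filter_upwards [Filter.eventually_ge_atTop 0] with ρ hρ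
      rw [norm_pow_mul_cexp _ _ hρ, Real.rpow_natCast]
    have h := integral_Ioi_of_hasDerivAt_of_tendsto' hd (hi1.sub hi2) ht
    rw [integral_sub hi1 hi2, integral_const_mul, integral_const_mul, ih] at h
    have e : w ^ (-(n : ℤ) - 1) = w * w ^ (-((n + 1 : ℕ) : ℤ) - 1) := by
      rw [← zpow_one_add₀ hw0]; congr 1; push_cast; ring
    rw [e] at h
    apply mul_left_cancel₀ hw0
    rw [Nat.factorial_succ]
    rw [Complex.ofReal_zero, zero_pow (Nat.succ_ne_zero n), zero_mul, sub_zero] at h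
    push_cast at h ⊢
    linear_combination -h

/-! ### Laplace integrals -/

/-- The Laplace integral `∫ (r + i a cos θ) ^ m dθ` over a full period, for an integer exponent `m`
of either sign. It equals `2π Rᵐ Pₘ(r / R)` for `m ≥ 0`, where `R² = a² + r²` and `Pₘ` is the
Legendre polynomial. -/
noncomputable def laplaceK (r a : ℝ) (m : ℤ) : ℂ :=
  ∫ θ in -π..π, ((r : ℂ) + Complex.I * (a * Real.cos θ : ℝ)) ^ m

theorem base_ne {r : ℝ} (hr : 0 < r) (y : ℝ) : (r : ℂ) + Complex.I * (y : ℝ) ≠ 0 := by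
  intro h
  have := congrArg Complex.re h
  simp at this
  linarith

theorem continuous_kernel {r : ℝ} (hr : 0 < r) (a : ℝ) (m : ℤ) :
    Continuous fun θ : ℝ => ((r : ℂ) + Complex.I * (a * Real.cos θ : ℝ)) ^ m :=
  Continuous.zpow₀ (by fun_prop) m fun θ => Or.inl (base_ne hr _)

/-- Bonnet's recurrence: the integral over a period of the derivative of `i a sin θ * v ^ m`
vanishes, where `v = r + i a cos θ`. -/
theorem laplaceK_rec {r : ℝ} (hr : 0 < r) (a : ℝ) (m : ℤ) :
    ((m : ℂ) + 1) * laplaceK r a (m + 1) =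
      (2 * m + 1) * r * laplaceK r a m - m * (a ^ 2 + r ^ 2) * laplaceK r a (m - 1) := by
  set v : ℝ → ℂ := fun θ => (r : ℂ) + Complex.I * (a * Real.cos θ : ℝ) with hv
  have hc : ∀ m : ℤ, IntervalIntegrable (fun θ => v θ ^ m) volume (-π) π := fun m =>
    (continuous_kernel hr a m).intervalIntegrable _ _
  have hd : ∀ θ ∈ Set.uIcc (-π) π, HasDerivAt
      (fun θ : ℝ => Complex.I * a * ((Real.sin θ : ℝ) * v θ ^ m))
      (((m : ℂ) + 1) * v θ ^ (m + 1) - (2 * m + 1) * r * v θ ^ m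
        + m * (a ^ 2 + r ^ 2) * v θ ^ (m - 1)) θ := by
    intro θ _
    have hvθ : v θ ≠ 0 := base_ne hr _
    have h1 : HasDerivAt v (Complex.I * (a * (-Real.sin θ) : ℝ)) θ :=
      ((((Real.hasDerivAt_cos θ).const_mul a).ofReal_comp).const_mul Complex.I).const_add (r : ℂ)
    have h2 : HasDerivAt (fun θ => v θ ^ m)
        ((m * v θ ^ (m - 1)) * (Complex.I * (a * (-Real.sin θ) : ℝ))) θ :=
      (hasDerivAt_zpow m (v θ) (Or.inl hvθ)).comp θ h1
    have h3 := (((Real.hasDerivAt_sin θ).ofReal_comp.mul h2)).const_mul (Complex.I * a)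
    convert! h3 using 1
    have e1 : v θ ^ (m + 1) = v θ ^ 2 * v θ ^ (m - 1) := by
      rw [← zpow_natCast (v θ) 2, ← zpow_add₀ hvθ]; congr 1; push_cast; ring
    have e2 : v θ ^ m = v θ * v θ ^ (m - 1) := by
      rw [← zpow_one_add₀ hvθ]; congr 1; ring
    rw [e1, e2]
    have hs : (Real.sin θ : ℂ) ^ 2 = 1 - (Real.cos θ : ℂ) ^ 2 := by
      rw [← Complex.ofReal_pow, Real.sin_sq]; push_cast; ring
    have e3 : v θ = (r : ℂ) + Complex.I * (a * Real.cos θ) := by simp [hv]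
    have hI : Complex.I ^ 2 = -1 := Complex.I_sq
    generalize v θ ^ (m - 1) = V
    rw [e3]
    push_cast at hs ⊢
    linear_combination (V * m * (a : ℂ) ^ 2 * Complex.I ^ 2) * hs +
      (V * m * (a : ℂ) ^ 2) * hI
  have h := intervalIntegral.integral_eq_sub_of_hasDerivAt hd
    ((((hc (m + 1)).const_mul _).sub ((hc m).const_mul _)).add ((hc (m - 1)).const_mul _))
  rw [intervalIntegral.integral_add (((hc (m + 1)).const_mul _).sub ((hc m).const_mul _))
      ((hc (m - 1)).const_mul _),
    intervalIntegral.integral_sub ((hc (m + 1)).const_mul _) ((hc m).const_mul _)] at h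
  simp only [intervalIntegral.integral_const_mul] at h
  simp only [Real.sin_neg, Real.sin_pi] at h
  simp only [laplaceK]
  norm_num at h
  linear_combination h

theorem re_laplaceK {r : ℝ} (hr : 0 < r) (a : ℝ) (m : ℤ) :
    (laplaceK r a m).re =
      ∫ θ in -π..π, (((r : ℂ) + Complex.I * (a * Real.cos θ : ℝ)) ^ m).re :=
  (Complex.reCLM.intervalIntegral_comp_comm
    ((continuous_kernel hr a m).intervalIntegrable _ _)).symm

/-- The initial value `Re K (-1) = 2π / R`, by a primitive of `r / (r² + a² cos² θ)` that is smooth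
on the whole period. -/
theorem re_laplaceK_neg_one {r : ℝ} (hr : 0 < r) (a : ℝ) :
    (laplaceK r a (-1)).re * √(a ^ 2 + r ^ 2) = 2 * π := by
  rw [re_laplaceK hr]
  set R := √(a ^ 2 + r ^ 2) with hR
  have hR2 : R ^ 2 = a ^ 2 + r ^ 2 := Real.sq_sqrt (by positivity)
  have hRpos : 0 < R := Real.sqrt_pos.2 (by positivity)
  have hrR : r ≤ R := Real.le_sqrt_of_sq_le (by nlinarith)
  -- With this `q < 1` the integrand is `R⁻¹` times a Poisson kernel,
  -- `(1 - q²) / (1 + 2 q cos 2θ + q²)`.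
  set q := (R - r) / (R + r) with hq
  have hq0 : 0 ≤ q := div_nonneg (by linarith) (by linarith)
  have hq1 : q < 1 := by rw [hq, div_lt_one (by linarith)]; linarith
  clear_value q
  have hd : ∀ θ ∈ Set.uIcc (-π) π, HasDerivAt
      (fun θ : ℝ => (θ - Real.arctan (q * Real.sin (2 * θ) / (1 + q * Real.cos (2 * θ)))) / R)
      ((((r : ℂ) + Complex.I * (a * Real.cos θ : ℝ)) ^ (-1 : ℤ)).re) θ := by
    intro θ _
    have hpos : 0 < 1 + q * Real.cos (2 * θ) := by
      nlinarith [Real.neg_one_le_cos (2 * θ)]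
    have h2 : HasDerivAt (fun θ : ℝ => 2 * θ) (2 * 1) θ := (hasDerivAt_id θ).const_mul 2
    have h3 := ((((h2.sin).const_mul q).div (((h2.cos).const_mul q).const_add 1) hpos.ne').arctan)
    have h4 := ((hasDerivAt_id θ).sub h3).div_const R
    convert! h4 using 1
    have e1 : (((r : ℂ) + Complex.I * (a * Real.cos θ : ℝ)) ^ (-1 : ℤ)).re =
        r / (r ^ 2 + a ^ 2 * Real.cos θ ^ 2) := by
      rw [zpow_neg_one, Complex.inv_re, Complex.normSq_apply]
      simp only [Complex.add_re, Complex.ofReal_re, Complex.I_re, Complex.mul_re, Complex.I_im,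
        Complex.ofReal_im, Complex.add_im, Complex.mul_im]
      congr 1 <;> ring
    simp only [Pi.div_apply]
    have hs := Real.sin_sq_add_cos_sq (2 * θ)
    have hc : Real.cos θ ^ 2 = 1 / 2 + Real.cos (2 * θ) / 2 := Real.cos_sq θ
    rw [e1, hc]
    have hqq : q * (R + r) = R - r := by rw [hq]; field_simp
    have ha : a ^ 2 = (R - r) * (R + r) := by linear_combination -hR2
    generalize Real.cos (2 * θ) = c at *
    generalize Real.sin (2 * θ) = s at *
    have hden : 0 < 1 + 2 * q * c + q ^ 2 := by nlinarith [sq_nonneg s, sq_nonneg (1 + q * c)]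
    have e2 : 1 / (1 + (q * s / (1 + q * c)) ^ 2) *
        ((q * (c * (2 * 1)) * (1 + q * c) - q * s * (q * (-s * (2 * 1)))) / (1 + q * c) ^ 2) =
        2 * (q * c + q ^ 2) / (1 + 2 * q * c + q ^ 2) := by
      have e3 : 1 + (q * s / (1 + q * c)) ^ 2 = (1 + 2 * q * c + q ^ 2) / (1 + q * c) ^ 2 := by
        field_simp
        linear_combination q ^ 2 * hs
      rw [e3]
      field_simp
      linear_combination q ^ 2 * hs
    have hD : 0 < r ^ 2 + a ^ 2 * (1 / 2 + c / 2) := by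
      rw [← hc]; positivity
    have e4 : (1 + 2 * q * c + q ^ 2) * (R + r) ^ 2 = 4 * (r ^ 2 + a ^ 2 * (1 / 2 + c / 2)) := by
      linear_combination (2 * c * (R + r) + q * (R + r) + (R - r)) * hqq - (2 + 2 * c) * ha
    have e5 : (1 - q ^ 2) * (R + r) ^ 2 = 4 * R * r := by
      linear_combination -(q * (R + r) + (R - r)) * hqq
    have hS : 0 < R + r := by linarith
    have e6 : 1 - 2 * (q * c + q ^ 2) / (1 + 2 * q * c + q ^ 2) =
        (1 - q ^ 2) * (R + r) ^ 2 / ((1 + 2 * q * c + q ^ 2) * (R + r) ^ 2) := by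
      field_simp
      ring
    rw [e2, e6, e4, e5]
    field_simp
  rw [intervalIntegral.integral_eq_sub_of_hasDerivAt hd]
  · simp [Real.sin_two_mul]
    field_simp
    ring
  · exact (Complex.continuous_re.comp (continuous_kernel hr a (-1))).intervalIntegrable _ _

theorem re_laplaceK_zero (r a : ℝ) : (laplaceK r a 0).re = 2 * π := by
  simp [laplaceK]; ring

/-- The recurrence at `m` and at `-m - 1` are the same up to powers of `R`, so the values at
`-n - 1` and at `n` are proportional. -/
theorem re_laplaceK_reflect {r : ℝ} (hr : 0 < r) (a : ℝ) (n : ℕ) :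
    (laplaceK r a (-(n : ℤ) - 1)).re * √(a ^ 2 + r ^ 2) ^ (2 * n + 1) = (laplaceK r a n).re := by
  set R := √(a ^ 2 + r ^ 2) with hR
  have hR2 : R ^ 2 = a ^ 2 + r ^ 2 := Real.sq_sqrt (by positivity)
  have hrec : ∀ m : ℤ, ((m : ℝ) + 1) * (laplaceK r a (m + 1)).re =
      (2 * m + 1) * r * (laplaceK r a m).re - m * R ^ 2 * (laplaceK r a (m - 1)).re := by
    intro m
    have h := laplaceK_rec hr a m
    have h' : (((m + 1 : ℝ) : ℂ)) * laplaceK r a (m + 1) =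
      (((2 * m + 1) * r : ℝ) : ℂ) * laplaceK r a m - ((m * R ^ 2 : ℝ) : ℂ) * laplaceK r a (m - 1) := by
      rw [hR2]; push_cast; exact h
    have h2 := congrArg Complex.re h'
    rwa [Complex.sub_re, Complex.re_ofReal_mul, Complex.re_ofReal_mul, Complex.re_ofReal_mul] at h2
  have h0 : (laplaceK r a (-1)).re * R = 2 * π := re_laplaceK_neg_one hr a
  have h0' := re_laplaceK_zero r a
  suffices H : ∀ n : ℕ, (laplaceK r a (-(n : ℤ) - 1)).re * R ^ (2 * n + 1) = (laplaceK r a n).re ∧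
      (laplaceK r a (-((n + 1 : ℕ) : ℤ) - 1)).re * R ^ (2 * (n + 1) + 1) =
        (laplaceK r a (n + 1 : ℕ)).re from (H n).1
  intro n
  induction n with
  | zero =>
    have h1 := hrec 0
    have h2 := hrec (-1)
    norm_num at h1 h2 ⊢
    refine ⟨by rw [h0, h0'], ?_⟩
    rw [h1, h0', ← h0]
    linear_combination -R * h2
  | succ n ih =>
    refine ⟨ih.2, ?_⟩
    have h1 := hrec (n + 1)
    have h2 := hrec (-n - 2)
    obtain ⟨i1, i2⟩ := ih
    have hn : (n : ℝ) + 2 ≠ 0 := by positivity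
    rw [show (n : ℤ) + 1 - 1 = n by ring, ← i1] at h1
    rw [show -(n : ℤ) - 2 + 1 = -n - 1 by ring] at h2
    push_cast at h1 h2 i2 ⊢
    rw [show -((n : ℤ) + 1) - 1 = -n - 2 by ring] at i2
    rw [show -((n : ℤ) + 1 + 1) - 1 = -n - 2 - 1 by ring]
    rw [← i2] at h1
    apply mul_left_cancel₀ hn
    linear_combination -h1 - R ^ (2 * n + 3) * h2

theorem integral_cos_pow_odd (l : ℕ) : ∫ θ in -π..π, Real.cos θ ^ (2 * l + 1) = 0 := by
  induction l with
  | zero => simp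
  | succ l ih =>
    rw [show 2 * (l + 1) + 1 = 2 * l + 1 + 2 by ring, integral_cos_pow, ih]; simp

theorem integral_cos_pow_even (l : ℕ) :
    ∫ θ in -π..π, Real.cos θ ^ (2 * l) = 2 * π * ((2 * l).choose l / 4 ^ l) := by
  induction l with
  | zero => simp; ring
  | succ l ih =>
    rw [show 2 * (l + 1) = 2 * l + 2 by ring, integral_cos_pow, ih]
    have h := Nat.succ_mul_centralBinom_succ l
    rw [Nat.centralBinom, Nat.centralBinom, show 2 * (l + 1) = 2 * l + 2 by ring] at h
    have h' : ((l : ℝ) + 1) * ((2 * l + 2).choose (l + 1)) =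
      2 * (2 * l + 1) * ((2 * l).choose l) := by exact_mod_cast h
    have hl : (l : ℝ) + 1 ≠ 0 := by positivity
    rw [show ((2 * l + 2).choose (l + 1) : ℝ) = 2 * (2 * l + 1) * ((2 * l).choose l) / (l + 1) by
      rw [← h']; field_simp]
    simp
    field_simp
    ring

theorem sum_range_two_mul {M : Type*} [AddCommMonoid M] (f : ℕ → M) (N : ℕ) :
    ∑ j ∈ Finset.range (2 * N), f j = ∑ l ∈ Finset.range N, (f (2 * l) + f (2 * l + 1)) := by
  induction N with
  | zero => simp
  | succ N ih =>
    rw [show 2 * (N + 1) = 2 * N + 1 + 1 by ring, Finset.sum_range_succ, Finset.sum_range_succ, ih,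
      Finset.sum_range_succ, add_assoc]

/-- Only even powers of `cos θ` contribute to the binomial expansion, and these are given by
Wallis' formula. -/
theorem laplaceK_odd (r a : ℝ) (ν : ℕ) :
    laplaceK r a (2 * ν + 1 : ℕ) = ((2 * π * r * ∑ l ∈ Finset.range (ν + 1),
      ((2 * ν + 1).choose (2 * l) * (2 * l).choose l : ℝ) *
      (-1 / 4) ^ l * (r ^ 2) ^ (ν - l) * (a ^ 2) ^ l : ℝ) : ℂ) := by
  have h1 : ∀ θ : ℝ, ((r : ℂ) + Complex.I * (a * Real.cos θ : ℝ)) ^ ((2 * ν + 1 : ℕ) : ℤ) =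
      ∑ j ∈ Finset.range (2 * (ν + 1)), ((Complex.I * a) ^ j * (r : ℂ) ^ (2 * ν + 1 - j) *
        ((2 * ν + 1).choose j : ℂ)) * ((Real.cos θ ^ j : ℝ) : ℂ) := by
    intro θ
    rw [zpow_natCast, add_comm, add_pow]
    refine Finset.sum_congr rfl fun j _ => ?_
    push_cast; ring
  simp only [laplaceK, h1]
  rw [intervalIntegral.integral_finsetSum fun j _ =>
    Continuous.intervalIntegrable (by fun_prop) _ _]
  simp only [intervalIntegral.integral_const_mul, intervalIntegral.integral_ofReal]
  rw [sum_range_two_mul, Finset.mul_sum, Complex.ofReal_sum]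
  refine Finset.sum_congr rfl fun l hl => ?_
  have hl' : l ≤ ν := by simpa [Nat.lt_succ_iff] using hl
  rw [integral_cos_pow_odd, integral_cos_pow_even,
    show 2 * ν + 1 - 2 * l = 2 * (ν - l) + 1 by omega, pow_mul, mul_pow, Complex.I_sq,
    neg_one_mul, neg_pow, neg_div, neg_pow (1 / 4 : ℝ)]
  push_cast
  simp
  field_simp
  ring

/-! ### Reduction to Laplace integrals in polar coordinates -/

theorem integral_euclidean_polar (f : EuclideanSpace ℝ (Fin 2) → ℝ) :
    ∫ t, f t = ∫ p in Set.Ioi (0 : ℝ) ×ˢ Set.Ioo (-π) π,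
      p.1 * f !₂[p.1 * Real.cos p.2, p.1 * Real.sin p.2] := by
  have h1 := (PiLp.volume_preserving_toLp (Fin 2)).integral_comp
    (MeasurableEquiv.toLp 2 (Fin 2 → ℝ)).measurableEmbedding f
  have h2 := (volume_preserving_finTwoArrow ℝ).symm.integral_comp'
    (fun v : Fin 2 → ℝ => f (WithLp.toLp 2 v))
  rw [← h1, ← h2, ← integral_comp_polarCoord_symm]
  rfl

theorem radial_integral (n : ℕ) {r : ℝ} (hr : 0 < r) (g : ℝ) :
    ∫ ρ in Set.Ioi (0 : ℝ), Real.cos (ρ * g) * (ρ ^ n * Real.exp (-r * ρ)) =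
      n.factorial * (((r : ℂ) + Complex.I * (g : ℝ)) ^ (-(n : ℤ) - 1)).re := by
  have hw : 0 < ((r : ℂ) + Complex.I * (g : ℝ)).re := by simpa using hr
  have h := congrArg Complex.re (integral_pow_mul_cexp n hw)
  rw [← Complex.ofReal_natCast, Complex.re_ofReal_mul] at h
  rw [← h, ← RCLike.re_eq_complex_re, ← integral_re (integrableOn_pow_mul_cexp n hw)]
  refine setIntegral_congr_fun measurableSet_Ioi fun ρ _ => ?_
  simp only [RCLike.re_eq_complex_re]
  rw [← Complex.ofReal_pow, Complex.re_ofReal_mul, Complex.exp_re]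
  simp
  rw [mul_comm g ρ]
  ring

/-- Rotation invariance of the angular integral, which allows `x` to be taken on the first
coordinate axis. -/
theorem integral_shift (h : ℝ → ℝ) (φ : ℝ) :
    ∫ θ in Set.Ioo (-π) π, h (Real.cos (θ - φ)) = ∫ θ in -π..π, h (Real.cos θ) := by
  rw [← integral_Ioc_eq_integral_Ioo, ← intervalIntegral.integral_of_le (by linarith [pi_pos]),
    intervalIntegral.integral_comp_sub_right (fun θ => h (Real.cos θ))]
  have hp : Function.Periodic (fun θ => h (Real.cos θ)) (2 * π) := fun θ => by simp
  have := hp.intervalIntegral_add_eq (-π - φ) (-π)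
  rwa [show -π - φ + 2 * π = π - φ by ring, show -π + 2 * π = π by ring] at this

theorem integral_eq_laplaceK (ν : ℕ) {r : ℝ} (hr : 0 < r) (x : EuclideanSpace ℝ (Fin 2)) :
    ∫ t : EuclideanSpace ℝ (Fin 2),
        Real.cos ⟪t, x⟫ * (‖t‖ ^ 2) ^ ν * Real.exp (-r * (‖t‖ ^ 2) ^ ((1 : ℝ) / 2)) =
      (2 * ν + 1).factorial * (laplaceK r ‖x‖ (-((2 * ν + 1 : ℕ) : ℤ) - 1)).re := by
  -- `φ` is the polar angle of `x`.
  obtain ⟨φ, hφ0, hφ1⟩ : ∃ φ, x 0 = ‖x‖ * Real.cos φ ∧ x 1 = ‖x‖ * Real.sin φ := by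
    have hn : ‖(⟨x 0, x 1⟩ : ℂ)‖ = ‖x‖ := by
      rw [EuclideanSpace.norm_eq, Complex.norm_def, Complex.normSq_apply]
      simp [Fin.sum_univ_two, pow_two]
    exact ⟨Complex.arg ⟨x 0, x 1⟩, by rw [← hn, Complex.norm_mul_cos_arg],
      by rw [← hn, Complex.norm_mul_sin_arg]⟩
  rw [integral_euclidean_polar]
  -- The Jacobian `ρ` raises the exponent of `ρ` to `2ν + 1`.
  have h1 : ∀ p ∈ Set.Ioi (0 : ℝ) ×ˢ Set.Ioo (-π) π,
      p.1 * (Real.cos ⟪(!₂[p.1 * Real.cos p.2, p.1 * Real.sin p.2] : EuclideanSpace ℝ (Fin 2)), x⟫ *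
        (‖(!₂[p.1 * Real.cos p.2, p.1 * Real.sin p.2] : EuclideanSpace ℝ (Fin 2))‖ ^ 2) ^ ν *
        Real.exp (-r * (‖(!₂[p.1 * Real.cos p.2, p.1 * Real.sin p.2] :
          EuclideanSpace ℝ (Fin 2))‖ ^ 2) ^ ((1 : ℝ) / 2))) =
      Real.cos (p.1 * (‖x‖ * Real.cos (p.2 - φ))) *
        (p.1 ^ (2 * ν + 1) * Real.exp (-r * p.1)) := by
    rintro ⟨ρ, θ⟩ ⟨hρ, -⟩
    have hρ' : (0 : ℝ) < ρ := hρ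
    have hn : ‖(!₂[ρ * Real.cos θ, ρ * Real.sin θ] : EuclideanSpace ℝ (Fin 2))‖ ^ 2 = ρ ^ 2 := by
      rw [EuclideanSpace.norm_sq_eq]
      simp [Fin.sum_univ_two]
      linear_combination ρ ^ 2 * Real.sin_sq_add_cos_sq θ
    have hi : ⟪(!₂[ρ * Real.cos θ, ρ * Real.sin θ] : EuclideanSpace ℝ (Fin 2)), x⟫ =
        ρ * (‖x‖ * Real.cos (θ - φ)) := by
      rw [PiLp.inner_apply]
      simp [Fin.sum_univ_two, hφ0, hφ1, Real.cos_sub]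
      ring
    simp only [hn, hi, ← Real.sqrt_eq_rpow, Real.sqrt_sq hρ'.le]
    ring
  rw [setIntegral_congr_fun (measurableSet_Ioi.prod measurableSet_Ioo) h1,
    Measure.volume_eq_prod, ← Measure.prod_restrict, integral_prod_symm]
  · simp only [radial_integral _ hr]
    rw [integral_const_mul, re_laplaceK hr, integral_shift
      (fun c => (((r : ℂ) + Complex.I * (‖x‖ * c : ℝ)) ^ (-((2 * ν + 1 : ℕ) : ℤ) - 1)).re) φ]
  · have h2 : Integrable (fun p : ℝ × ℝ => (p.1 ^ (2 * ν + 1) * Real.exp (-r * p.1)) * (1 : ℝ))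
        ((volume.restrict (Set.Ioi 0)).prod (volume.restrict (Set.Ioo (-π) π))) :=
      Integrable.mul_prod (integrableOn_pow_mul_exp _ hr) (integrable_const _)
    simp only [mul_one] at h2
    refine h2.mono (by fun_prop) (Filter.Eventually.of_forall fun p => ?_)
    rw [norm_mul]
    exact mul_le_of_le_one_left (norm_nonneg _) (Real.abs_cos_le_one _)

/-! ### The closed form -/

/-- Closed form of `I_{ν,r}(x;1/2)` in the bivariate case `p = 2`, for a nonnegative
integer `ν` and `r > 0`. -/
theorem kotz_integral_s_eq_half_bivariate
    (ν : ℕ) (r : ℝ) (hr : 0 < r) (x : EuclideanSpace ℝ (Fin 2)) :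
    ∫ t : EuclideanSpace ℝ (Fin 2),
        Real.cos ⟪t, x⟫ * (‖t‖ ^ 2) ^ ν * Real.exp (-r * (‖t‖ ^ 2) ^ ((1 : ℝ) / 2)) =
      2 * π * Real.Gamma (2 * ((ν : ℝ) + 1)) * ((ν + 1).factorial : ℝ) /
          ((4 : ℝ) ^ ν * r ^ (2 * (ν + 1)) * (‖x‖ ^ 2 + r ^ 2) ^ (2 * (ν : ℝ) + 3 / 2)) *
        ∑ k ∈ Finset.range (ν + 1),
          (((2 * (ν - k)).factorial : ℝ) * ((2 * k).factorial : ℝ) /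
              (((ν - k).factorial : ℝ) * ((k.factorial : ℝ)) ^ 2)) *
            (‖x‖ ^ 2 + r ^ 2) ^ k *
            ∑ l ∈ Finset.range (ν - k + 1),
              ((-1 : ℝ) ^ l * (4 : ℝ) ^ l * r ^ (4 * ν + 3 - 2 * k - 2 * l) *
                  ‖x‖ ^ (2 * l)) /
                (((ν + 1 - l).factorial : ℝ) * ((ν - k - l).factorial : ℝ) *
                  ((2 * l).factorial : ℝ)) := by
  have hR : 0 < ‖x‖ ^ 2 + r ^ 2 := by positivity
  have hG : Real.Gamma (2 * ((ν : ℝ) + 1)) = (2 * ν + 1).factorial := by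
    rw [show 2 * ((ν : ℝ) + 1) = ((2 * ν + 1 : ℕ) : ℝ) + 1 by push_cast; ring,
      Real.Gamma_nat_eq_factorial]
  have hpow : (‖x‖ ^ 2 + r ^ 2) ^ (2 * (ν : ℝ) + 3 / 2) =
      √(‖x‖ ^ 2 + r ^ 2) ^ (2 * (2 * ν + 1) + 1) := by
    rw [Real.sqrt_eq_rpow, ← Real.rpow_mul_natCast hR.le]
    congr 1; push_cast; ring
  have hrefl := re_laplaceK_reflect hr ‖x‖ (2 * ν + 1)
  rw [laplaceK_odd, Complex.ofReal_re] at hrefl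
  have hcoef := (closed_form_coeff ν (r ^ 2) (‖x‖ ^ 2)).trans
    (coeff_eq_laplace ν (r ^ 2) (‖x‖ ^ 2))
  -- Pull `r ^ (2ν + 3)` out; the truncated subtractions in the exponent are exact in range.
  have hsum : ∀ k ∈ Finset.range (ν + 1),
      (((2 * (ν - k)).factorial : ℝ) * ((2 * k).factorial : ℝ) /
              (((ν - k).factorial : ℝ) * ((k.factorial : ℝ)) ^ 2)) *
            (‖x‖ ^ 2 + r ^ 2) ^ k *
            ∑ l ∈ Finset.range (ν - k + 1),
              ((-1 : ℝ) ^ l * (4 : ℝ) ^ l * r ^ (4 * ν + 3 - 2 * k - 2 * l) *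
                  ‖x‖ ^ (2 * l)) /
                (((ν + 1 - l).factorial : ℝ) * ((ν - k - l).factorial : ℝ) *
                  ((2 * l).factorial : ℝ)) =
      r ^ (2 * (ν + 1)) * r * ((((2 * (ν - k)).factorial : ℝ) * ((2 * k).factorial : ℝ) /
              (((ν - k).factorial : ℝ) * ((k.factorial : ℝ)) ^ 2)) *
            (‖x‖ ^ 2 + r ^ 2) ^ k *
            ∑ l ∈ Finset.range (ν - k + 1),
              ((-1 : ℝ) ^ l * (4 : ℝ) ^ l * (r ^ 2) ^ (ν - k - l) * (‖x‖ ^ 2) ^ l) /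
                (((ν + 1 - l).factorial : ℝ) * ((ν - k - l).factorial : ℝ) *
                  ((2 * l).factorial : ℝ))) := by
    intro k hk
    rw [mul_left_comm (r ^ (2 * (ν + 1)) * r)]
    congr 1
    rw [Finset.mul_sum]
    refine Finset.sum_congr rfl fun l hl => ?_
    simp only [Finset.mem_range] at hk hl
    rw [show 4 * ν + 3 - 2 * k - 2 * l = 2 * (ν + 1) + 1 + 2 * (ν - k - l) by omega, pow_add r,
      pow_succ r, pow_mul r 2 (ν - k - l), pow_mul ‖x‖]
    ring
  rw [integral_eq_laplaceK ν hr x, Finset.sum_congr rfl hsum, ← Finset.mul_sum, hG, hpow]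
  have hS : 0 < √(‖x‖ ^ 2 + r ^ 2) ^ (2 * (2 * ν + 1) + 1) := pow_pos (Real.sqrt_pos.2 hR) _
  rw [eq_div_of_mul_eq hS.ne' hrefl]
  generalize √(‖x‖ ^ 2 + r ^ 2) ^ (2 * (2 * ν + 1) + 1) = S at *
  generalize (∑ l ∈ Finset.range (ν + 1), ((2 * ν + 1).choose (2 * l) * (2 * l).choose l : ℝ) *
      (-1 / 4) ^ l * (r ^ 2) ^ (ν - l) * (‖x‖ ^ 2) ^ l) = T at *
  rw [div_mul_eq_mul_div, mul_div_assoc', div_eq_div_iff hS.ne' (by positivity)]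
  linear_combination -(2 * π * ((2 * ν + 1).factorial : ℝ) * r ^ (2 * (ν + 1)) * r * S) * hcoef
end
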